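/- arXiv:math/0107037 — 13 statements merged into one kernel-verified Lean document; each statement's English description precedes it below -/
import Mathlib

section
/- Let U ⊆ ℂⁿ be open and F : U → ℂ holomorphic with Im HF(z) invertible for every z ∈ U. Define φ_F : U → ℝ^{2n+1} by φ_F(z) = (Re z, Re ∇F(z), 2 Im F(z) − 2 Σ_k Re((∇F(z))_k) · Im(z^k)). Then φ_F is a smooth immersion: its real Fréchet derivative at every point of U is injective. -/
/-- Directional derivatives of a holomorphic function of several variables are holomorphic. -/
theorem differentiableOn_fderiv_apply_aux {n : ℕ} {U : Set (Fin n → ℂ)} (hU : IsOpen U)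
    {f : (Fin n → ℂ) → ℂ} (hf : DifferentiableOn ℂ f U) (X : Fin n → ℂ) :
    DifferentiableOn ℂ (fun z => fderiv ℂ f z X) U := by
  intro z₀ hz₀
  have hcont : ContinuousAt f z₀ := (hf.differentiableAt (hU.mem_nhds hz₀)).continuousAt
  obtain ⟨δ, hδ, hball⟩ := Metric.mem_nhds_iff.1 (Filter.inter_mem (hU.mem_nhds hz₀)
    (hcont (Metric.ball_mem_nhds (f z₀) one_pos)))
  obtain ⟨ε, hε, rfl⟩ : ∃ ε > 0, δ = 4 * ε := ⟨δ / 4, by positivity, by ring⟩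
  have hbU : ∀ y, dist y z₀ < 4 * ε → y ∈ U := fun y hy => (hball hy).1
  have hbf : ∀ y, dist y z₀ < 4 * ε → dist (f y) (f z₀) < 1 := fun y hy => (hball hy).2
  clear hball
  obtain ⟨r, hr, hrX⟩ : ∃ r > 0, r * ‖X‖ ≤ ε := by
    refine ⟨ε / (‖X‖ + 1), by positivity, ?_⟩
    rw [div_mul_eq_mul_div, div_le_iff₀ (by positivity)]
    nlinarith [norm_nonneg X]
  have hdist : ∀ x ∈ Metric.ball z₀ ε, ∀ w : ℂ, ‖w‖ ≤ r → dist (x + w • X) z₀ < 2 * ε := by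
    intro x hx w hw
    have h1 : dist (x + w • X) x ≤ ε := by
      rw [dist_eq_norm, add_sub_cancel_left, norm_smul]
      exact (mul_le_mul_of_nonneg_right hw (norm_nonneg _)).trans hrX
    have h2 : dist x z₀ < ε := hx
    linarith [dist_triangle (x + w • X) x z₀]
  have hfd : ∀ y, dist y z₀ < 2 * ε → HasFDerivAt f (fderiv ℂ f y) y := fun y hy =>
    (hf.differentiableAt (hU.mem_nhds (hbU y (by linarith)))).hasFDerivAt
  have hfb : ∀ y, dist y z₀ < 2 * ε → ‖fderiv ℂ f y‖ ≤ 2 / (2 * ε) := by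
    intro y hy
    have hsub : ∀ x ∈ Metric.ball y (2 * ε), dist x z₀ < 4 * ε := by
      intro x hx
      have : dist x y < 2 * ε := hx
      linarith [dist_triangle x y z₀]
    refine Complex.norm_fderiv_le_div_of_mapsTo_ball
      (hf.mono fun x hx => hbU x (hsub x hx)) ?_ (by positivity)
    intro x hx
    have h1 := hbf x (hsub x hx)
    have h2 := hbf y (by linarith)
    rw [Metric.mem_closedBall]
    linarith [dist_triangle_right (f x) (f y) (f z₀)]
  let γ : ℝ → ℂ := circleMap 0 r
  have hγc : Continuous γ := continuous_circleMap 0 r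
  have hγn : ∀ θ, ‖γ θ‖ = r := fun θ => by simp [γ, abs_of_pos hr]
  have hγ0 : ∀ θ, γ θ ≠ 0 := fun θ h => by have := hγn θ; rw [h] at this; simp at this; linarith
  let c : ℝ → ℂ := fun θ => deriv (circleMap 0 r) θ * (1 / (γ θ - 0) ^ 2)
  have hcc : Continuous c := by
    have h : c = fun θ => γ θ * Complex.I * (1 / (γ θ - 0) ^ 2) := by
      funext θ; simp [c, γ]
    rw [h]
    refine (hγc.mul continuous_const).mul (continuous_const.div (by fun_prop) ?_)
    intro θ; simpa using hγ0 θ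
  have hformula : ∀ x ∈ Metric.ball z₀ ε, fderiv ℂ f x X =
      (2 * Real.pi * Complex.I)⁻¹ * ∫ θ in (0:ℝ)..2 * Real.pi, c θ * f (x + γ θ • X) := by
    intro x hx
    have hd : ∀ w : ℂ, ‖w‖ ≤ r →
        HasDerivAt (fun w : ℂ => f (x + w • X)) (fderiv ℂ f (x + w • X) X) w := by
      intro w hw
      have h1 : HasDerivAt (fun w : ℂ => x + w • X) X w := by
        simpa using ((hasDerivAt_id w).smul_const X).const_add x
      exact (hfd _ (hdist x hx w hw)).comp_hasDerivAt w h1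
    have h := DifferentiableOn.deriv_eq_smul_circleIntegral (f := fun w : ℂ => f (x + w • X))
      (c := 0) hr (fun w hw => (hd w (by simpa using hw)).differentiableAt.differentiableWithinAt)
    rw [(hd 0 (by simpa using hr.le)).deriv] at h
    simp only [zero_smul, add_zero, smul_eq_mul] at h
    have hI : (2 * Real.pi * Complex.I : ℂ) ≠ 0 := Complex.two_pi_I_ne_zero
    rw [eq_inv_mul_iff_mul_eq₀ hI, ← h, circleIntegral]
    refine intervalIntegral.integral_congr fun θ _ => ?_
    simp only [c, γ, smul_eq_mul, mul_assoc]
  have hcf : ∀ x ∈ Metric.ball z₀ ε, Continuous (fun θ => c θ * f (x + γ θ • X)) := by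
    intro x hx
    refine hcc.mul (continuous_iff_continuousAt.2 fun θ => ?_)
    have h1 : ContinuousAt (fun θ => x + γ θ • X) θ := by fun_prop
    exact ContinuousAt.comp (f := fun θ => x + γ θ • X) (g := f)
      (hfd _ (hdist x hx _ (hγn θ).le)).continuousAt h1
  have hmem : Metric.ball z₀ ε ∈ nhds z₀ := Metric.ball_mem_nhds _ hε
  have hz : z₀ ∈ Metric.ball z₀ ε := Metric.mem_ball_self hε
  have key := intervalIntegral.hasFDerivAt_integral_of_dominated_of_fderiv_le (𝕜 := ℂ)
    (μ := MeasureTheory.volume) (a := 0) (b := 2 * Real.pi)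
    (F := fun x θ => c θ * f (x + γ θ • X))
    (F' := fun x θ => c θ • fderiv ℂ f (x + γ θ • X))
    (bound := fun θ => ‖c θ‖ * (2 / (2 * ε))) hmem
    (by filter_upwards [hmem] with x hx using (hcf x hx).aestronglyMeasurable)
    ((hcf z₀ hz).intervalIntegrable _ _)
    (by
      have hm : Measurable fun θ => fderiv ℂ f (z₀ + γ θ • X) :=
        (measurable_fderiv ℂ f).comp (by fun_prop : Continuous fun θ => z₀ + γ θ • X).measurable
      have : FiniteDimensional ℂ ((Fin n → ℂ) →L[ℂ] ℂ) := inferInstance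
      have : ProperSpace ((Fin n → ℂ) →L[ℂ] ℂ) := FiniteDimensional.proper ℂ _
      exact hcc.aestronglyMeasurable.smul hm.stronglyMeasurable.aestronglyMeasurable)
    (Filter.Eventually.of_forall fun θ _ x hx => by
      rw [norm_smul]
      exact mul_le_mul_of_nonneg_left (hfb _ (hdist x hx _ (hγn θ).le)) (norm_nonneg _))
    ((hcc.norm.mul continuous_const).intervalIntegrable _ _)
    (Filter.Eventually.of_forall fun θ _ x hx => by
      have h1 : HasFDerivAt (fun x => f (x + γ θ • X)) (fderiv ℂ f (x + γ θ • X)) x :=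
        (hasFDerivAt_comp_add_right _).2 (hfd _ (hdist x hx _ (hγn θ).le))
      exact h1.const_mul (c θ))
  have h2 := (key.differentiableAt.const_mul (2 * Real.pi * Complex.I)⁻¹)
  refine (h2.congr_of_eventuallyEq ?_).differentiableWithinAt
  filter_upwards [hmem] with x hx using hformula x hx

/-- Holomorphic functions of several variables are smooth. -/
theorem contDiffOn_of_holomorphic_aux {n : ℕ} {U : Set (Fin n → ℂ)} (hU : IsOpen U) (m : ℕ) :
    ∀ {f : (Fin n → ℂ) → ℂ}, DifferentiableOn ℂ f U → ContDiffOn ℂ m f U := by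
  induction m with
  | zero => intro f hf; exact contDiffOn_zero.2 hf.continuousOn
  | succ m ih =>
    intro f hf
    push_cast
    rw [contDiffOn_succ_iff_fderiv_of_isOpen hU]
    refine ⟨hf, fun h => by simp at h, contDiffOn_clm_apply.2 fun X => ?_⟩
    exact ih (differentiableOn_fderiv_apply_aux hU hf X)

theorem contDiffOn_real_of_holomorphic_aux {n : ℕ} {U : Set (Fin n → ℂ)} (hU : IsOpen U)
    {f : (Fin n → ℂ) → ℂ} (hf : DifferentiableOn ℂ f U) : ContDiffOn ℝ (⊤ : ℕ∞) f U :=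
  contDiffOn_infty.2 fun m => (contDiffOn_of_holomorphic_aux hU m hf).restrict_scalars ℝ


/-- Let `U ⊆ ℂⁿ` be open and `F` holomorphic on `U` (with holomorphic gradient
`gradF` and Hessian `hessF`) such that `Im (hessF z)` is invertible for every `z ∈ U`. Then
`φ_F(z) = (Re z, Re ∇F(z), 2 Im F(z) − 2 ∑_k Re((∇F(z))_k) Im(z^k))` is a smooth immersion:
its real Fréchet derivative at every point of `U` is injective. -/
theorem phiF_smooth_immersion
    {n : ℕ} (hn : 1 ≤ n) (U : Set (Fin n → ℂ)) (hU : IsOpen U)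
    (F : (Fin n → ℂ) → ℂ) (gradF : (Fin n → ℂ) → (Fin n → ℂ))
    (hessF : (Fin n → ℂ) → Matrix (Fin n) (Fin n) ℂ)
    (hF : ∀ z ∈ U, ∃ L : (Fin n → ℂ) →L[ℂ] ℂ,
      HasFDerivAt F L z ∧ ∀ X, L X = ∑ k, gradF z k * X k)
    (hgrad : ∀ z ∈ U, ∃ L : (Fin n → ℂ) →L[ℂ] (Fin n → ℂ),
      HasFDerivAt gradF L z ∧ ∀ X, L X = (hessF z).mulVec X)
    (hnondeg : ∀ z ∈ U, IsUnit ((hessF z).map Complex.im))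
    (φ : (Fin n → ℂ) → (Fin n → ℝ) × (Fin n → ℝ) × ℝ)
    (hφ : ∀ z, φ z = ((fun i => (z i).re), (fun i => (gradF z i).re),
      2 * (F z).im - 2 * ∑ k, (gradF z k).re * (z k).im)) :
    ContDiffOn ℝ (⊤ : ℕ∞) φ U ∧
    ∀ z ∈ U, ∃ L : (Fin n → ℂ) →L[ℝ] (Fin n → ℝ) × (Fin n → ℝ) × ℝ,
      HasFDerivAt φ L z ∧ Function.Injective L := by
  have hFs : ContDiffOn ℝ (⊤ : ℕ∞) F U := contDiffOn_real_of_holomorphic_aux hU fun z hz => by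
    obtain ⟨L, hL, -⟩ := hF z hz
    exact hL.differentiableAt.differentiableWithinAt
  have hGs : ∀ i, ContDiffOn ℝ (⊤ : ℕ∞) (fun z => gradF z i) U := fun i =>
    contDiffOn_real_of_holomorphic_aux hU fun z hz => by
      obtain ⟨L, hL, -⟩ := hgrad z hz
      exact (differentiableAt_pi.1 hL.differentiableAt i).differentiableWithinAt
  have hre : ∀ {g : (Fin n → ℂ) → ℂ}, ContDiffOn ℝ (⊤ : ℕ∞) g U →
      ContDiffOn ℝ (⊤ : ℕ∞) (fun z => (g z).re) U := fun hg =>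
    Complex.reCLM.contDiff.comp_contDiffOn hg
  have him : ∀ {g : (Fin n → ℂ) → ℂ}, ContDiffOn ℝ (⊤ : ℕ∞) g U →
      ContDiffOn ℝ (⊤ : ℕ∞) (fun z => (g z).im) U := fun hg =>
    Complex.imCLM.contDiff.comp_contDiffOn hg
  have hz : ∀ i, ContDiffOn ℝ (⊤ : ℕ∞) (fun z : Fin n → ℂ => z i) U := fun i =>
    (contDiff_apply ℝ ℂ i).contDiffOn
  have hsm : ContDiffOn ℝ (⊤ : ℕ∞) φ U := by
    rw [funext hφ]
    refine (contDiffOn_pi.2 fun i => hre (hz i)).prodMk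
      ((contDiffOn_pi.2 fun i => hre (hGs i)).prodMk ?_)
    exact (contDiffOn_const.mul (him hFs)).sub (contDiffOn_const.mul
      (ContDiffOn.sum fun k _ => (hre (hGs k)).mul (him (hz k))))
  refine ⟨hsm, fun z hzU => ?_⟩
  have hd : HasFDerivAt φ (fderiv ℝ φ z) z :=
    ((hsm.contDiffAt (hU.mem_nhds hzU)).differentiableAt (by simp)).hasFDerivAt
  refine ⟨fderiv ℝ φ z, hd, ?_⟩
  obtain ⟨L, hL, hLX⟩ := hgrad z hzU
  have h1 : ∀ X i, (fderiv ℝ φ z X).1 i = (X i).re := by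
    intro X i
    have a : HasFDerivAt (fun z => (φ z).1 i) _ z := hasFDerivAt_pi'.1 hd.fst i
    have b : HasFDerivAt (fun z : Fin n → ℂ => (z i).re)
        (Complex.reCLM.comp (ContinuousLinearMap.proj (R := ℝ) (φ := fun _ : Fin n => ℂ) i)) z :=
      (Complex.reCLM.comp (ContinuousLinearMap.proj (R := ℝ) (φ := fun _ : Fin n => ℂ)
        i)).hasFDerivAt
    have e : (fun z => (φ z).1 i) = fun z : Fin n → ℂ => (z i).re := by
      funext w; rw [hφ]
    rw [e] at a
    have := DFunLike.congr_fun (a.unique b) X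
    simpa using this
  have h2 : ∀ X i, (fderiv ℝ φ z X).2.1 i = ((hessF z).mulVec X i).re := by
    intro X i
    have a : HasFDerivAt (fun z => (φ z).2.1 i) _ z := hasFDerivAt_pi'.1 hd.snd.fst i
    have b : HasFDerivAt (fun z : Fin n → ℂ => (gradF z i).re) _ z :=
      Complex.reCLM.hasFDerivAt.comp z (hasFDerivAt_pi'.1 (hL.restrictScalars ℝ) i)
    have e : (fun z => (φ z).2.1 i) = fun z : Fin n → ℂ => (gradF z i).re := by
      funext w; rw [hφ]
    rw [e] at a
    have := DFunLike.congr_fun (a.unique b) X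
    simpa [hLX] using this
  rw [injective_iff_map_eq_zero]
  intro X hX
  have hXre : ∀ i, (X i).re = 0 := fun i => by rw [← h1 X i, hX]; rfl
  have hHre : ∀ i, ((hessF z).mulVec X i).re = 0 := fun i => by rw [← h2 X i, hX]; rfl
  have hY : ((hessF z).map Complex.im).mulVec (fun i => (X i).im) = 0 := by
    funext i
    have := hHre i
    simp only [Matrix.mulVec, dotProduct, Complex.re_sum, Complex.mul_re, hXre, mul_zero,
      zero_sub, Finset.sum_neg_distrib, neg_eq_zero] at this
    simpa [Matrix.mulVec, dotProduct] using this
  have hY0 : (fun i => (X i).im) = 0 := by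
    apply Matrix.mulVec_injective_of_isUnit (hnondeg z hzU)
    rw [hY, Matrix.mulVec_zero]
  funext i
  exact Complex.ext (hXre i) (congrFun hY0 i)
end

section
/- Let U ⊆ ℂⁿ be open and F : U → ℂ holomorphic with Im HF(z) invertible for every z ∈ U, and let φ_F : U → ℝ^{2n+1} be defined by φ_F(z) = (Re z, Re ∇F(z), 2 Im F(z) − 2 Σ_k Re((∇F(z))_k) · Im(z^k)). Then for every z ∈ U, the last standard basis vector e_{2n+1} of ℝ^{2n+1} is transversal to the image of the derivative: ℝ^{2n+1} is the direct sum of the range of the real Fréchet derivative Dφ_F(z) and the line ℝ·e_{2n+1}. -/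
/-- With `F` holomorphic and nondegenerate on the open set `U ⊆ ℂⁿ` and
`φ_F(z) = (Re z, Re ∇F(z), 2 Im F(z) − 2 ∑_k Re((∇F(z))_k) Im(z^k))`, at every `z ∈ U`
the vector `e_{2n+1} = (0,0,1)` is transversal to the image of the derivative:
`ℝ^{2n+1}` is the direct sum of the range of the real Fréchet derivative `Dφ_F(z)`
and the line `ℝ · e_{2n+1}`. -/
theorem vertical_transversal_to_phiF
    {n : ℕ} (hn : 1 ≤ n) (U : Set (Fin n → ℂ)) (hU : IsOpen U)
    (F : (Fin n → ℂ) → ℂ) (gradF : (Fin n → ℂ) → (Fin n → ℂ))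
    (hessF : (Fin n → ℂ) → Matrix (Fin n) (Fin n) ℂ)
    (hF : ∀ z ∈ U, ∃ L : (Fin n → ℂ) →L[ℂ] ℂ,
      HasFDerivAt F L z ∧ ∀ X, L X = ∑ k, gradF z k * X k)
    (hgrad : ∀ z ∈ U, ∃ L : (Fin n → ℂ) →L[ℂ] (Fin n → ℂ),
      HasFDerivAt gradF L z ∧ ∀ X, L X = (hessF z).mulVec X)
    (hnondeg : ∀ z ∈ U, IsUnit ((hessF z).map Complex.im))
    (φ : (Fin n → ℂ) → (Fin n → ℝ) × (Fin n → ℝ) × ℝ)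
    (hφ : ∀ z, φ z = ((fun i => (z i).re), (fun i => (gradF z i).re),
      2 * (F z).im - 2 * ∑ k, (gradF z k).re * (z k).im)) :
    ∀ z ∈ U, ∃ L : (Fin n → ℂ) →L[ℝ] (Fin n → ℝ) × (Fin n → ℝ) × ℝ,
      HasFDerivAt φ L z ∧
      IsCompl (LinearMap.range (L.toLinearMap))
        (Submodule.span ℝ {((0, 0, 1) : (Fin n → ℝ) × (Fin n → ℝ) × ℝ)}) := by
  intro z hz
  obtain ⟨LF, hLF, -⟩ := hF z hz
  obtain ⟨LG, hLG, hLGX⟩ := hgrad z hz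
  have hF' : HasFDerivAt F (LF.restrictScalars ℝ) z := hLF.restrictScalars ℝ
  have hG' : HasFDerivAt gradF (LG.restrictScalars ℝ) z := hLG.restrictScalars ℝ
  let P : Fin n → ((Fin n → ℂ) →L[ℝ] ℂ) := fun i => ContinuousLinearMap.proj i
  let A : (Fin n → ℂ) →L[ℝ] (Fin n → ℝ) :=
    ContinuousLinearMap.pi fun i => Complex.reCLM.comp (P i)
  have hA : HasFDerivAt (fun w : Fin n → ℂ => fun i => (w i).re) A z := A.hasFDerivAt
  have hB : HasFDerivAt (fun w : Fin n → ℂ => fun i => (gradF w i).re)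
      (A.comp (LG.restrictScalars ℝ)) z :=
    HasFDerivAt.comp z (g := fun w : Fin n → ℂ => fun i => (w i).re) A.hasFDerivAt hG'
  have hC : DifferentiableAt ℝ
      (fun w : Fin n → ℂ => 2 * (F w).im - 2 * ∑ k, (gradF w k).re * (w k).im) z := by
    have h1 : DifferentiableAt ℝ (fun w => (F w).im) z :=
      (Complex.imCLM.hasFDerivAt.comp z hF').differentiableAt
    have h2 : ∀ k, DifferentiableAt ℝ (fun w => (gradF w k).re) z := fun k =>
      differentiableAt_pi.1 hB.differentiableAt k
    have h3 : ∀ k, DifferentiableAt ℝ (fun w : Fin n → ℂ => (w k).im) z := fun k =>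
      (Complex.imCLM.comp (P k)).differentiableAt
    exact (h1.const_mul 2).sub
      ((DifferentiableAt.fun_sum fun k _ => (h2 k).mul (h3 k)).const_mul 2)
  obtain ⟨C, hC⟩ := hC
  have key : ∀ X, A (LG X) = ((hessF z).map Complex.re).mulVec (fun i => (X i).re)
      - ((hessF z).map Complex.im).mulVec (fun i => (X i).im) := by
    intro X
    ext i
    change (LG X i).re = _
    rw [hLGX]
    simp [Matrix.mulVec, dotProduct, Finset.sum_sub_distrib]
  have hdet := hnondeg z hz
  refine ⟨A.prod ((A.comp (LG.restrictScalars ℝ)).prod C), ?_, ?_, ?_⟩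
  · rw [show φ = _ from funext hφ]
    exact hA.prodMk (hB.prodMk hC)
  · rw [Submodule.disjoint_def]
    rintro _ ⟨X, rfl⟩ hx
    obtain ⟨c, hc⟩ := Submodule.mem_span_singleton.1 hx
    have e1 : A X = 0 := by simpa using (congrArg Prod.fst hc).symm
    have e2 : A (LG X) = 0 := by simpa using (congrArg (fun p => p.2.1) hc).symm
    have e1' : (fun i => (X i).re) = 0 := e1
    rw [key, e1', Matrix.mulVec_zero, zero_sub, neg_eq_zero] at e2
    have e3 : (fun i => (X i).im) = 0 :=
      Matrix.mulVec_injective_of_isUnit hdet (by rw [e2, Matrix.mulVec_zero])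
    have : X = 0 := by
      ext i
      exact Complex.ext (congrFun e1' i) (congrFun e3 i)
    rw [this, map_zero]
  · rw [codisjoint_iff, eq_top_iff]
    rintro ⟨a, b, c⟩ -
    obtain ⟨y, hy⟩ := (Matrix.mulVec_surjective_iff_isUnit.2 hdet)
      (((hessF z).map Complex.re).mulVec a - b)
    let X : Fin n → ℂ := fun i => ⟨a i, y i⟩
    have e1 : A X = a := rfl
    have e2 : A (LG X) = b := by
      rw [key]
      change ((hessF z).map Complex.re).mulVec a - ((hessF z).map Complex.im).mulVec y = b
      rw [hy]; abel
    refine Submodule.mem_sup.2 ⟨_, ⟨X, rfl⟩, (c - C X) • (0, 0, 1),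
      Submodule.smul_mem _ _ (Submodule.mem_span_singleton_self _), ?_⟩
    simp [e1, e2]
end

section
/- With the notation of the coordinate setup: for all indices i, j ∈ {1,…,n} and at every point of W, Σ_{k=1}^n ( (∂u^k/∂x^i)(∂v_k/∂y_j) − (∂u^k/∂y_j)(∂v_k/∂x^i) ) = δ_i^j (Kronecker delta). -/
/-- Partial derivative of a real function on `ℝⁿ × ℝⁿ` in the direction of the
`i`-th coordinate of the first factor (the `x`-coordinates). -/
noncomputable def pdx {n : ℕ} (g : (Fin n → ℝ) × (Fin n → ℝ) → ℝ)
    (i : Fin n) (p : (Fin n → ℝ) × (Fin n → ℝ)) : ℝ :=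
  fderiv ℝ g p (Pi.single i 1, 0)

/-- Partial derivative of a real function on `ℝⁿ × ℝⁿ` in the direction of the
`j`-th coordinate of the second factor (the `y`-coordinates). -/
noncomputable def pdy {n : ℕ} (g : (Fin n → ℝ) × (Fin n → ℝ) → ℝ)
    (j : Fin n) (p : (Fin n → ℝ) × (Fin n → ℝ)) : ℝ :=
  fderiv ℝ g p (0, Pi.single j 1)

/-- `∑_k (∂u^k/∂x^i · ∂v_k/∂y_j − ∂u^k/∂y_j · ∂v_k/∂x^i) = δ_i^j` on `W`. -/
theorem lagrangian_rel_delta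
    {n : ℕ} (hn : 1 ≤ n) (U : Set (Fin n → ℂ)) (hU : IsOpen U)
    (F : (Fin n → ℂ) → ℂ) (gradF : (Fin n → ℂ) → (Fin n → ℂ))
    (hessF : (Fin n → ℂ) → Matrix (Fin n) (Fin n) ℂ)
    (hF : ∀ z ∈ U, ∃ L : (Fin n → ℂ) →L[ℂ] ℂ,
      HasFDerivAt F L z ∧ ∀ X, L X = ∑ k, gradF z k * X k)
    (hgrad : ∀ z ∈ U, ∃ L : (Fin n → ℂ) →L[ℂ] (Fin n → ℂ),
      HasFDerivAt gradF L z ∧ ∀ X, L X = (hessF z).mulVec X)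
    (hsymm : ∀ z ∈ U, (hessF z).IsSymm)
    (hnondeg : ∀ z ∈ U, IsUnit ((hessF z).map Complex.im))
    (W : Set ((Fin n → ℝ) × (Fin n → ℝ))) (hW : IsOpen W)
    (Ψ : (Fin n → ℝ) × (Fin n → ℝ) → (Fin n → ℂ))
    (hΨU : ∀ p ∈ W, Ψ p ∈ U)
    (hΨsmooth : ContDiffOn ℝ (⊤ : ℕ∞) Ψ W)
    (hΨinv : ∀ p ∈ W,
      ((fun i => (Ψ p i).re, fun i => (gradF (Ψ p) i).re) :
        (Fin n → ℝ) × (Fin n → ℝ)) = p) :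
    ∀ i j : Fin n, ∀ p ∈ W,
      ∑ k, (pdx (fun q => (Ψ q k).im) i p * pdy (fun q => (gradF (Ψ q) k).im) j p
          - pdy (fun q => (Ψ q k).im) j p * pdx (fun q => (gradF (Ψ q) k).im) i p)
        = if i = j then (1 : ℝ) else 0 := by
  intro i j p hp
  obtain ⟨L, hL, hLX⟩ := hgrad _ (hΨU p hp)
  have hD : HasFDerivAt Ψ (fderiv ℝ Ψ p) p :=
    ((hΨsmooth.contDiffAt (hW.mem_nhds hp)).differentiableAt (by simp)).hasFDerivAt
  have hG : HasFDerivAt (fun q => gradF (Ψ q)) ((L.restrictScalars ℝ).comp (fderiv ℝ Ψ p)) p :=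
    (hL.restrictScalars ℝ).comp p hD
  have hre : ∀ (f : (Fin n → ℝ) × (Fin n → ℝ) → (Fin n → ℂ))
      (f' : (Fin n → ℝ) × (Fin n → ℝ) →L[ℝ] (Fin n → ℂ)), HasFDerivAt f f' p → ∀ k,
      HasFDerivAt (fun q => (f q k).re)
        (Complex.reCLM.comp ((ContinuousLinearMap.proj k).comp f')) p := by
    intro f f' hf k
    exact Complex.reCLM.hasFDerivAt.comp p ((hasFDerivAt_pi'.1 hf) k)
  have him : ∀ (f : (Fin n → ℝ) × (Fin n → ℝ) → (Fin n → ℂ))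
      (f' : (Fin n → ℝ) × (Fin n → ℝ) →L[ℝ] (Fin n → ℂ)), HasFDerivAt f f' p → ∀ k v,
      fderiv ℝ (fun q => (f q k).im) p v = (f' v k).im := by
    intro f f' hf k v
    have h : HasFDerivAt (fun q => (f q k).im)
        (Complex.imCLM.comp ((ContinuousLinearMap.proj k).comp f')) p :=
      Complex.imCLM.hasFDerivAt.comp p ((hasFDerivAt_pi'.1 hf) k)
    rw [h.fderiv]; rfl
  have hx : ∀ k v, (fderiv ℝ Ψ p v k).re = v.1 k := by
    intro k v
    have h1 := hre _ _ hD k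
    have h2 : HasFDerivAt (fun q : (Fin n → ℝ) × (Fin n → ℝ) => q.1 k)
        ((ContinuousLinearMap.proj k).comp (ContinuousLinearMap.fst ℝ (Fin n → ℝ) (Fin n → ℝ))) p :=
      ((ContinuousLinearMap.proj (R := ℝ) (φ := fun _ : Fin n => ℝ) k).comp
        (ContinuousLinearMap.fst ℝ (Fin n → ℝ) (Fin n → ℝ))).hasFDerivAt
    have h3 := h2.congr_of_eventuallyEq (f₁ := fun q => (Ψ q k).re) (by
      filter_upwards [hW.mem_nhds hp] with q hq
      exact congrFun (congrArg Prod.fst (hΨinv q hq)) k)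
    exact DFunLike.congr_fun (h1.unique h3) v
  have hy : ∀ k v, (L (fderiv ℝ Ψ p v) k).re = v.2 k := by
    intro k v
    have h1 := hre _ _ hG k
    have h2 : HasFDerivAt (fun q : (Fin n → ℝ) × (Fin n → ℝ) => q.2 k)
        ((ContinuousLinearMap.proj k).comp (ContinuousLinearMap.snd ℝ (Fin n → ℝ) (Fin n → ℝ))) p :=
      ((ContinuousLinearMap.proj (R := ℝ) (φ := fun _ : Fin n => ℝ) k).comp
        (ContinuousLinearMap.snd ℝ (Fin n → ℝ) (Fin n → ℝ))).hasFDerivAt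
    have h3 := h2.congr_of_eventuallyEq (f₁ := fun q => (gradF (Ψ q) k).re) (by
      filter_upwards [hW.mem_nhds hp] with q hq
      exact congrFun (congrArg Prod.snd (hΨinv q hq)) k)
    exact DFunLike.congr_fun (h1.unique h3) v
  have hs : ∀ A B : Fin n → ℂ, ∑ k, (A k * L B k - B k * L A k) = 0 := by
    intro A B
    rw [Finset.sum_sub_distrib, sub_eq_zero]
    change A ⬝ᵥ L B = B ⬝ᵥ L A
    rw [hLX, hLX, Matrix.dotProduct_mulVec, ← Matrix.mulVec_transpose,
      (hsymm _ (hΨU p hp)).eq, dotProduct_comm]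
  have key := congrArg Complex.re
    (hs (fderiv ℝ Ψ p (Pi.single i 1, 0)) (fderiv ℝ Ψ p (0, Pi.single j 1)))
  simp only [Complex.re_sum, Complex.sub_re, Complex.mul_re, hx, hy, Complex.zero_re] at key
  have e : ∑ k, (Pi.single i (1 : ℝ) : Fin n → ℝ) k * (Pi.single j (1 : ℝ) : Fin n → ℝ) k
      = if i = j then (1 : ℝ) else 0 := by
    simp [Pi.single_apply, eq_comm]
  rw [← e, ← sub_eq_zero, ← Finset.sum_sub_distrib, ← neg_eq_zero, ← key,
    ← Finset.sum_neg_distrib]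
  refine Finset.sum_congr rfl fun k _ => ?_
  simp only [pdx, pdy, him _ _ hD, him _ _ hG, ContinuousLinearMap.comp_apply,
    ContinuousLinearMap.coe_restrictScalars', Pi.zero_apply]
  ring
end

section
/- With the notation of the coordinate setup: for all indices i, j ∈ {1,…,n} and at every point of W, Σ_{k=1}^n (∂u^k/∂x^i)(∂v_k/∂x^j) = Σ_{k=1}^n (∂u^k/∂x^j)(∂v_k/∂x^i). -/
/-- `∑_k (∂u^k/∂x^i)(∂v_k/∂x^j) = ∑_k (∂u^k/∂x^j)(∂v_k/∂x^i)` on `W`. -/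
theorem lagrangian_rel_xx
    {n : ℕ} (hn : 1 ≤ n) (U : Set (Fin n → ℂ)) (hU : IsOpen U)
    (F : (Fin n → ℂ) → ℂ) (gradF : (Fin n → ℂ) → (Fin n → ℂ))
    (hessF : (Fin n → ℂ) → Matrix (Fin n) (Fin n) ℂ)
    (hF : ∀ z ∈ U, ∃ L : (Fin n → ℂ) →L[ℂ] ℂ,
      HasFDerivAt F L z ∧ ∀ X, L X = ∑ k, gradF z k * X k)
    (hgrad : ∀ z ∈ U, ∃ L : (Fin n → ℂ) →L[ℂ] (Fin n → ℂ),
      HasFDerivAt gradF L z ∧ ∀ X, L X = (hessF z).mulVec X)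
    (hsymm : ∀ z ∈ U, (hessF z).IsSymm)
    (hnondeg : ∀ z ∈ U, IsUnit ((hessF z).map Complex.im))
    (W : Set ((Fin n → ℝ) × (Fin n → ℝ))) (hW : IsOpen W)
    (Ψ : (Fin n → ℝ) × (Fin n → ℝ) → (Fin n → ℂ))
    (hΨU : ∀ p ∈ W, Ψ p ∈ U)
    (hΨsmooth : ContDiffOn ℝ (⊤ : ℕ∞) Ψ W)
    (hΨinv : ∀ p ∈ W,
      ((fun i => (Ψ p i).re, fun i => (gradF (Ψ p) i).re) :
        (Fin n → ℝ) × (Fin n → ℝ)) = p) :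
    ∀ i j : Fin n, ∀ p ∈ W,
      ∑ k, pdx (fun q => (Ψ q k).im) i p * pdx (fun q => (gradF (Ψ q) k).im) j p
        = ∑ k, pdx (fun q => (Ψ q k).im) j p * pdx (fun q => (gradF (Ψ q) k).im) i p := by
  intro i j p hp
  have hΨd : HasFDerivAt Ψ (fderiv ℝ Ψ p) p :=
    ((hΨsmooth.contDiffAt (hW.mem_nhds hp)).differentiableAt (by simp)).hasFDerivAt
  obtain ⟨L, hL, hLX⟩ := hgrad _ (hΨU p hp)
  set D := fderiv ℝ Ψ p with hD
  have hG : HasFDerivAt (fun q => gradF (Ψ q)) ((L.restrictScalars ℝ).comp D) p :=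
    (hL.restrictScalars ℝ).comp p hΨd
  have e1 : ∀ (l : Fin n) k, pdx (fun q => (Ψ q k).im) l p = (D (Pi.single l 1, 0) k).im := by
    intro l k
    have h := Complex.imCLM.hasFDerivAt.comp p ((hasFDerivAt_pi'.1 hΨd) k)
    have h2 : HasFDerivAt (fun q => (Ψ q k).im) _ p := h
    rw [pdx, h2.fderiv]
    rfl
  have e2 : ∀ (l : Fin n) k, pdx (fun q => (gradF (Ψ q) k).im) l p
      = (L (D (Pi.single l 1, 0)) k).im := by
    intro l k
    have h := Complex.imCLM.hasFDerivAt.comp p ((hasFDerivAt_pi'.1 hG) k)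
    have h2 : HasFDerivAt (fun q => (gradF (Ψ q) k).im) _ p := h
    rw [pdx, h2.fderiv]
    rfl
  have e3 : ∀ (l : Fin n) k, (L (D (Pi.single l 1, 0)) k).re = 0 := by
    intro l k
    have h := Complex.reCLM.hasFDerivAt.comp p ((hasFDerivAt_pi'.1 hG) k)
    have h2 : HasFDerivAt (fun q => (gradF (Ψ q) k).re) _ p := h
    have h3 : HasFDerivAt (fun q : (Fin n → ℝ) × (Fin n → ℝ) => q.2 k)
        ((ContinuousLinearMap.proj (R := ℝ) (φ := fun _ : Fin n => ℝ) k).comp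
          (ContinuousLinearMap.snd ℝ (Fin n → ℝ) (Fin n → ℝ))) p :=
      ((ContinuousLinearMap.proj (R := ℝ) (φ := fun _ : Fin n => ℝ) k).comp
          (ContinuousLinearMap.snd ℝ (Fin n → ℝ) (Fin n → ℝ))).hasFDerivAt
    have h4 : (fun q => (gradF (Ψ q) k).re) =ᶠ[nhds p]
        (fun q : (Fin n → ℝ) × (Fin n → ℝ) => q.2 k) := by
      filter_upwards [hW.mem_nhds hp] with q hq
      exact congrFun (congrArg Prod.snd (hΨinv q hq)) k
    have h5 := h2.unique (h3.congr_of_eventuallyEq h4)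
    have h6 := DFunLike.congr_fun h5 ((Pi.single l 1, 0) : (Fin n → ℝ) × (Fin n → ℝ))
    exact h6
  simp only [e1, e2]
  have key : ∀ A B : Fin n → ℂ, ∑ k, A k * L B k = ∑ k, B k * L A k := by
    intro A B
    rw [hLX, hLX]
    change dotProduct A ((hessF (Ψ p)).mulVec B) = dotProduct B ((hessF (Ψ p)).mulVec A)
    rw [Matrix.dotProduct_mulVec, ← Matrix.mulVec_transpose, (hsymm _ (hΨU p hp)).eq,
      dotProduct_comm]
  have := congrArg Complex.re (key (D (Pi.single i 1, 0)) (D (Pi.single j 1, 0)))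
  simpa [Complex.re_sum, Complex.mul_re, e3] using this
end

section
/- With the notation of the coordinate setup: for all indices i, j ∈ {1,…,n} and at every point of W, Σ_{k=1}^n (∂u^k/∂y_i)(∂v_k/∂y_j) = Σ_{k=1}^n (∂u^k/∂y_j)(∂v_k/∂y_i). -/
/-- `∑_k (∂u^k/∂y_i)(∂v_k/∂y_j) = ∑_k (∂u^k/∂y_j)(∂v_k/∂y_i)` on `W`. -/
theorem lagrangian_rel_yy
    {n : ℕ} (hn : 1 ≤ n) (U : Set (Fin n → ℂ)) (hU : IsOpen U)
    (F : (Fin n → ℂ) → ℂ) (gradF : (Fin n → ℂ) → (Fin n → ℂ))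
    (hessF : (Fin n → ℂ) → Matrix (Fin n) (Fin n) ℂ)
    (hF : ∀ z ∈ U, ∃ L : (Fin n → ℂ) →L[ℂ] ℂ,
      HasFDerivAt F L z ∧ ∀ X, L X = ∑ k, gradF z k * X k)
    (hgrad : ∀ z ∈ U, ∃ L : (Fin n → ℂ) →L[ℂ] (Fin n → ℂ),
      HasFDerivAt gradF L z ∧ ∀ X, L X = (hessF z).mulVec X)
    (hsymm : ∀ z ∈ U, (hessF z).IsSymm)
    (hnondeg : ∀ z ∈ U, IsUnit ((hessF z).map Complex.im))
    (W : Set ((Fin n → ℝ) × (Fin n → ℝ))) (hW : IsOpen W)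
    (Ψ : (Fin n → ℝ) × (Fin n → ℝ) → (Fin n → ℂ))
    (hΨU : ∀ p ∈ W, Ψ p ∈ U)
    (hΨsmooth : ContDiffOn ℝ (⊤ : ℕ∞) Ψ W)
    (hΨinv : ∀ p ∈ W,
      ((fun i => (Ψ p i).re, fun i => (gradF (Ψ p) i).re) :
        (Fin n → ℝ) × (Fin n → ℝ)) = p) :
    ∀ i j : Fin n, ∀ p ∈ W,
      ∑ k, pdy (fun q => (Ψ q k).im) i p * pdy (fun q => (gradF (Ψ q) k).im) j p
        = ∑ k, pdy (fun q => (Ψ q k).im) j p * pdy (fun q => (gradF (Ψ q) k).im) i p := by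
  intro i j p hp
  have hWn : W ∈ nhds p := hW.mem_nhds hp
  have hD : HasFDerivAt Ψ (fderiv ℝ Ψ p) p :=
    ((hΨsmooth.contDiffAt hWn).differentiableAt (by simp)).hasFDerivAt
  obtain ⟨L, hL, hLX⟩ := hgrad (Ψ p) (hΨU p hp)
  have hG : HasFDerivAt (fun q => gradF (Ψ q)) ((L.restrictScalars ℝ).comp (fderiv ℝ Ψ p)) p :=
    (hL.restrictScalars ℝ).comp p hD
  have hu : ∀ k m, pdy (fun q => (Ψ q k).im) m p
      = (fderiv ℝ Ψ p (0, Pi.single m 1) k).im := by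
    intro k m
    have h := Complex.imCLM.hasFDerivAt.comp p (hasFDerivAt_pi'.1 hD k)
    have h' := h.fderiv
    change fderiv ℝ (fun q => (Ψ q k).im) p = _ at h'
    unfold pdy
    rw [h']
    rfl
  have hv : ∀ k m, pdy (fun q => (gradF (Ψ q) k).im) m p
      = ((hessF (Ψ p)).mulVec (fderiv ℝ Ψ p (0, Pi.single m 1)) k).im := by
    intro k m
    have h := Complex.imCLM.hasFDerivAt.comp p (hasFDerivAt_pi'.1 hG k)
    have h' := h.fderiv
    change fderiv ℝ (fun q => (gradF (Ψ q) k).im) p = _ at h'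
    unfold pdy
    rw [h', ← hLX]
    rfl
  have hr : ∀ k m, (fderiv ℝ Ψ p (0, Pi.single m 1) k).re = 0 := by
    intro k m
    have h := Complex.reCLM.hasFDerivAt.comp p (hasFDerivAt_pi'.1 hD k)
    have h2 : HasFDerivAt (fun q : (Fin n → ℝ) × (Fin n → ℝ) => q.1 k)
        ((ContinuousLinearMap.proj k).comp
          (ContinuousLinearMap.fst ℝ (Fin n → ℝ) (Fin n → ℝ))) p :=
      ((ContinuousLinearMap.proj (R := ℝ) (φ := fun _ : Fin n => ℝ) k).comp
        (ContinuousLinearMap.fst ℝ (Fin n → ℝ) (Fin n → ℝ))).hasFDerivAt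
    have h3 := h2.congr_of_eventuallyEq (f₁ := fun q => (Ψ q k).re) (by
      filter_upwards [hWn] with q hq
      exact congrFun (congrArg Prod.fst (hΨinv q hq)) k)
    have h4 := congrArg (fun T => T ((0 : Fin n → ℝ), (Pi.single m 1 : Fin n → ℝ)))
      (HasFDerivAt.unique h h3)
    exact h4
  simp only [hu, hv]
  have hs : ∀ a b : Fin n → ℂ, ∑ k, a k * (hessF (Ψ p)).mulVec b k
      = ∑ k, b k * (hessF (Ψ p)).mulVec a k := by
    intro a b
    change a ⬝ᵥ (hessF (Ψ p)).mulVec b = b ⬝ᵥ (hessF (Ψ p)).mulVec a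
    rw [Matrix.dotProduct_mulVec, ← Matrix.mulVec_transpose, (hsymm _ (hΨU p hp)).eq,
      dotProduct_comm]
  have h := congrArg Complex.re
    (hs (fderiv ℝ Ψ p (0, Pi.single i 1)) (fderiv ℝ Ψ p (0, Pi.single j 1)))
  simpa only [Complex.re_sum, Complex.mul_re, hr, zero_mul, zero_sub, Finset.sum_neg_distrib,
    neg_inj] using h
end

section
/- With the notation of the coordinate setup: for all indices i, j ∈ {1,…,n} and at every point of W, ∂u^i/∂x^j = −∂v_j/∂y_i. -/
/-- `∂u^i/∂x^j = −∂v_j/∂y_i` on `W`. -/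
theorem lagrangian_rel_ux_vy
    {n : ℕ} (hn : 1 ≤ n) (U : Set (Fin n → ℂ)) (hU : IsOpen U)
    (F : (Fin n → ℂ) → ℂ) (gradF : (Fin n → ℂ) → (Fin n → ℂ))
    (hessF : (Fin n → ℂ) → Matrix (Fin n) (Fin n) ℂ)
    (hF : ∀ z ∈ U, ∃ L : (Fin n → ℂ) →L[ℂ] ℂ,
      HasFDerivAt F L z ∧ ∀ X, L X = ∑ k, gradF z k * X k)
    (hgrad : ∀ z ∈ U, ∃ L : (Fin n → ℂ) →L[ℂ] (Fin n → ℂ),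
      HasFDerivAt gradF L z ∧ ∀ X, L X = (hessF z).mulVec X)
    (hsymm : ∀ z ∈ U, (hessF z).IsSymm)
    (hnondeg : ∀ z ∈ U, IsUnit ((hessF z).map Complex.im))
    (W : Set ((Fin n → ℝ) × (Fin n → ℝ))) (hW : IsOpen W)
    (Ψ : (Fin n → ℝ) × (Fin n → ℝ) → (Fin n → ℂ))
    (hΨU : ∀ p ∈ W, Ψ p ∈ U)
    (hΨsmooth : ContDiffOn ℝ (⊤ : ℕ∞) Ψ W)
    (hΨinv : ∀ p ∈ W,
      ((fun i => (Ψ p i).re, fun i => (gradF (Ψ p) i).re) :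
        (Fin n → ℝ) × (Fin n → ℝ)) = p) :
    ∀ i j : Fin n, ∀ p ∈ W,
      pdx (fun q => (Ψ q i).im) j p = - pdy (fun q => (gradF (Ψ q) j).im) i p := by
  intro i j p hp
  have hWp : W ∈ nhds p := hW.mem_nhds hp
  have hD : HasFDerivAt Ψ (fderiv ℝ Ψ p) p :=
    ((hΨsmooth.contDiffAt hWp).differentiableAt (by simp)).hasFDerivAt
  set D := fderiv ℝ Ψ p with hDdef
  obtain ⟨L, hL, hLX⟩ := hgrad (Ψ p) (hΨU p hp)
  have hG : HasFDerivAt (fun q => gradF (Ψ q)) ((L.restrictScalars ℝ).comp D) p :=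
    (hL.restrictScalars ℝ).comp p hD
  have hDk : ∀ k, HasFDerivAt (fun q => Ψ q k)
      ((ContinuousLinearMap.proj (R := ℝ) (φ := fun _ : Fin n => ℂ) k).comp D) p :=
    fun k => (hasFDerivAt_pi'.1 hD) k
  have hGk : ∀ k, HasFDerivAt (fun q => gradF (Ψ q) k)
      ((ContinuousLinearMap.proj (R := ℝ) (φ := fun _ : Fin n => ℂ) k).comp
        ((L.restrictScalars ℝ).comp D)) p :=
    fun k => (hasFDerivAt_pi'.1 hG) k
  have hu : fderiv ℝ (fun q => (Ψ q i).im) p = _ :=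
    (Complex.imCLM.hasFDerivAt.comp p (hDk i)).fderiv
  have hv : fderiv ℝ (fun q => (gradF (Ψ q) j).im) p = _ :=
    (Complex.imCLM.hasFDerivAt.comp p (hGk j)).fderiv
  have hre1 : ∀ k a, (D a k).re = a.1 k := by
    intro k a
    have h1 := Complex.reCLM.hasFDerivAt.comp p (hDk k)
    have h2 : HasFDerivAt (fun q : (Fin n → ℝ) × (Fin n → ℝ) => q.1 k)
        ((ContinuousLinearMap.proj (R := ℝ) (φ := fun _ : Fin n => ℝ) k).comp
          (ContinuousLinearMap.fst ℝ _ _)) p :=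
      ((ContinuousLinearMap.proj (R := ℝ) (φ := fun _ : Fin n => ℝ) k).comp
          (ContinuousLinearMap.fst ℝ (Fin n → ℝ) (Fin n → ℝ))).hasFDerivAt
    have h3 := h2.congr_of_eventuallyEq (f₁ := fun q => (Ψ q k).re) (by
      filter_upwards [hWp] with q hq
      exact congrFun (congrArg Prod.fst (hΨinv q hq)) k)
    exact DFunLike.congr_fun (h1.unique h3) a
  have hre2 : ∀ k a, (L (D a) k).re = a.2 k := by
    intro k a
    have h1 := Complex.reCLM.hasFDerivAt.comp p (hGk k)
    have h2 : HasFDerivAt (fun q : (Fin n → ℝ) × (Fin n → ℝ) => q.2 k)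
        ((ContinuousLinearMap.proj (R := ℝ) (φ := fun _ : Fin n => ℝ) k).comp
          (ContinuousLinearMap.snd ℝ _ _)) p :=
      ((ContinuousLinearMap.proj (R := ℝ) (φ := fun _ : Fin n => ℝ) k).comp
          (ContinuousLinearMap.snd ℝ (Fin n → ℝ) (Fin n → ℝ))).hasFDerivAt
    have h3 := h2.congr_of_eventuallyEq (f₁ := fun q => (gradF (Ψ q) k).re) (by
      filter_upwards [hWp] with q hq
      exact congrFun (congrArg Prod.snd (hΨinv q hq)) k)
    exact DFunLike.congr_fun (h1.unique h3) a
  have hS : ∀ X Y : Fin n → ℂ, ∑ k, L X k * Y k = ∑ k, L Y k * X k := by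
    intro X Y
    have h := (hsymm (Ψ p) (hΨU p hp)).eq
    change L X ⬝ᵥ Y = L Y ⬝ᵥ X
    rw [hLX, hLX, dotProduct_comm, Matrix.dotProduct_mulVec, ← Matrix.mulVec_transpose, h]
  unfold pdx pdy
  rw [hu, hv]
  change (D (Pi.single j 1, 0) i).im = -(L (D (0, Pi.single i 1)) j).im
  have key := congrArg Complex.im (hS (D (Pi.single j 1, 0)) (D (0, Pi.single i 1)))
  simp only [Complex.im_sum, Complex.mul_im, hre1, hre2] at key
  simp [Pi.single_apply, Finset.sum_add_distrib] at key
  linarith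
end

section
/- With the notation of the coordinate setup: for all indices i, j ∈ {1,…,n} and at every point of W, ∂u^i/∂y_j = ∂u^j/∂y_i. -/
/-- `∂u^i/∂y_j = ∂u^j/∂y_i` on `W`. -/
theorem lagrangian_rel_uy_symm
    {n : ℕ} (hn : 1 ≤ n) (U : Set (Fin n → ℂ)) (hU : IsOpen U)
    (F : (Fin n → ℂ) → ℂ) (gradF : (Fin n → ℂ) → (Fin n → ℂ))
    (hessF : (Fin n → ℂ) → Matrix (Fin n) (Fin n) ℂ)
    (hF : ∀ z ∈ U, ∃ L : (Fin n → ℂ) →L[ℂ] ℂ,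
      HasFDerivAt F L z ∧ ∀ X, L X = ∑ k, gradF z k * X k)
    (hgrad : ∀ z ∈ U, ∃ L : (Fin n → ℂ) →L[ℂ] (Fin n → ℂ),
      HasFDerivAt gradF L z ∧ ∀ X, L X = (hessF z).mulVec X)
    (hsymm : ∀ z ∈ U, (hessF z).IsSymm)
    (hnondeg : ∀ z ∈ U, IsUnit ((hessF z).map Complex.im))
    (W : Set ((Fin n → ℝ) × (Fin n → ℝ))) (hW : IsOpen W)
    (Ψ : (Fin n → ℝ) × (Fin n → ℝ) → (Fin n → ℂ))
    (hΨU : ∀ p ∈ W, Ψ p ∈ U)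
    (hΨsmooth : ContDiffOn ℝ (⊤ : ℕ∞) Ψ W)
    (hΨinv : ∀ p ∈ W,
      ((fun i => (Ψ p i).re, fun i => (gradF (Ψ p) i).re) :
        (Fin n → ℝ) × (Fin n → ℝ)) = p) :
    ∀ i j : Fin n, ∀ p ∈ W,
      pdy (fun q => (Ψ q i).im) j p = pdy (fun q => (Ψ q j).im) i p := by
  intro i j p hp
  have hd : HasFDerivAt Ψ (fderiv ℝ Ψ p) p :=
    ((hΨsmooth.contDiffAt (hW.mem_nhds hp)).differentiableAt (by simp)).hasFDerivAt
  obtain ⟨L, hL, hLX⟩ := hgrad (Ψ p) (hΨU p hp)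
  have hg : HasFDerivAt (fun q => gradF (Ψ q)) ((L.restrictScalars ℝ).comp (fderiv ℝ Ψ p)) p :=
    (hL.restrictScalars ℝ).comp p hd
  generalize hD : fderiv ℝ Ψ p = D at hd hg
  have him : ∀ i j, pdy (fun q => (Ψ q i).im) j p = (D (0, Pi.single j 1) i).im := by
    intro i j
    have h : HasFDerivAt (fun q => (Ψ q i).im)
        (Complex.imCLM.comp ((ContinuousLinearMap.proj (R := ℝ) i).comp D)) p :=
      Complex.imCLM.hasFDerivAt.comp p ((hasFDerivAt_pi'.1 hd) i)
    rw [pdy, h.fderiv]; rfl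
  have hre : ∀ v k, (D v k).re = v.1 k := by
    intro v k
    have h : HasFDerivAt (fun q => (Ψ q k).re)
        (Complex.reCLM.comp ((ContinuousLinearMap.proj (R := ℝ) k).comp D)) p :=
      Complex.reCLM.hasFDerivAt.comp p ((hasFDerivAt_pi'.1 hd) k)
    have h2 : HasFDerivAt (fun q : (Fin n → ℝ) × (Fin n → ℝ) => q.1 k)
        ((ContinuousLinearMap.proj (R := ℝ) k).comp (ContinuousLinearMap.fst ℝ _ _)) p :=
      ((ContinuousLinearMap.proj (R := ℝ) (φ := fun _ : Fin n => ℝ) k).comp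
        (ContinuousLinearMap.fst ℝ (Fin n → ℝ) (Fin n → ℝ))).hasFDerivAt
    have h3 := h2.congr_of_eventuallyEq (f₁ := fun q => (Ψ q k).re) (by
      filter_upwards [hW.mem_nhds hp] with q hq
      exact congrFun (congrArg Prod.fst (hΨinv q hq)) k)
    exact DFunLike.congr_fun (h.unique h3) v
  have hre2 : ∀ v k, ((hessF (Ψ p)).mulVec (D v) k).re = v.2 k := by
    intro v k
    have h : HasFDerivAt (fun q => (gradF (Ψ q) k).re)
        (Complex.reCLM.comp ((ContinuousLinearMap.proj (R := ℝ) k).comp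
          ((L.restrictScalars ℝ).comp D))) p :=
      Complex.reCLM.hasFDerivAt.comp p ((hasFDerivAt_pi'.1 hg) k)
    have h2 : HasFDerivAt (fun q : (Fin n → ℝ) × (Fin n → ℝ) => q.2 k)
        ((ContinuousLinearMap.proj (R := ℝ) k).comp (ContinuousLinearMap.snd ℝ _ _)) p :=
      ((ContinuousLinearMap.proj (R := ℝ) (φ := fun _ : Fin n => ℝ) k).comp
        (ContinuousLinearMap.snd ℝ (Fin n → ℝ) (Fin n → ℝ))).hasFDerivAt
    have h3 := h2.congr_of_eventuallyEq (f₁ := fun q => (gradF (Ψ q) k).re) (by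
      filter_upwards [hW.mem_nhds hp] with q hq
      exact congrFun (congrArg Prod.snd (hΨinv q hq)) k)
    rw [← hLX]
    exact DFunLike.congr_fun (h.unique h3) v
  have key : ∀ i j, (D (0, Pi.single j 1) i).im =
      (D (0, Pi.single j 1) ⬝ᵥ (hessF (Ψ p)).mulVec (D (0, Pi.single i 1))).im := by
    intro i j
    simp [dotProduct, Complex.im_sum, Complex.mul_im, hre, hre2, Pi.single_apply]
  rw [him, him, key i j, key j i, Matrix.dotProduct_mulVec, ← Matrix.mulVec_transpose,
    (hsymm _ (hΨU p hp)).eq, dotProduct_comm]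
end

section
/- With the notation of the coordinate setup: for all indices i, j ∈ {1,…,n} and at every point of W, ∂v_i/∂x^j = ∂v_j/∂x^i. -/
/-- `∂v_i/∂x^j = ∂v_j/∂x^i` on `W`. -/
theorem lagrangian_rel_vx_symm
    {n : ℕ} (hn : 1 ≤ n) (U : Set (Fin n → ℂ)) (hU : IsOpen U)
    (F : (Fin n → ℂ) → ℂ) (gradF : (Fin n → ℂ) → (Fin n → ℂ))
    (hessF : (Fin n → ℂ) → Matrix (Fin n) (Fin n) ℂ)
    (hF : ∀ z ∈ U, ∃ L : (Fin n → ℂ) →L[ℂ] ℂ,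
      HasFDerivAt F L z ∧ ∀ X, L X = ∑ k, gradF z k * X k)
    (hgrad : ∀ z ∈ U, ∃ L : (Fin n → ℂ) →L[ℂ] (Fin n → ℂ),
      HasFDerivAt gradF L z ∧ ∀ X, L X = (hessF z).mulVec X)
    (hsymm : ∀ z ∈ U, (hessF z).IsSymm)
    (hnondeg : ∀ z ∈ U, IsUnit ((hessF z).map Complex.im))
    (W : Set ((Fin n → ℝ) × (Fin n → ℝ))) (hW : IsOpen W)
    (Ψ : (Fin n → ℝ) × (Fin n → ℝ) → (Fin n → ℂ))
    (hΨU : ∀ p ∈ W, Ψ p ∈ U)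
    (hΨsmooth : ContDiffOn ℝ (⊤ : ℕ∞) Ψ W)
    (hΨinv : ∀ p ∈ W,
      ((fun i => (Ψ p i).re, fun i => (gradF (Ψ p) i).re) :
        (Fin n → ℝ) × (Fin n → ℝ)) = p) :
    ∀ i j : Fin n, ∀ p ∈ W,
      pdx (fun q => (gradF (Ψ q) i).im) j p = pdx (fun q => (gradF (Ψ q) j).im) i p := by
  intro i j p hp
  have hnhds : W ∈ nhds p := hW.mem_nhds hp
  have hD : HasFDerivAt Ψ (fderiv ℝ Ψ p) p :=
    ((hΨsmooth.contDiffAt hnhds).differentiableAt (by simp)).hasFDerivAt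
  obtain ⟨L, hL, hLX⟩ := hgrad (Ψ p) (hΨU p hp)
  have hG : HasFDerivAt (fun q => gradF (Ψ q))
      ((L.restrictScalars ℝ).comp (fderiv ℝ Ψ p)) p :=
    (hL.restrictScalars ℝ).comp p hD
  generalize fderiv ℝ Ψ p = D at hD hG
  -- derivative of the real part of Ψ
  have hre : ∀ (k : Fin n) (w : (Fin n → ℝ) × (Fin n → ℝ)), (D w k).re = w.1 k := by
    intro k w
    have h1 : HasFDerivAt (fun q => (Ψ q k).re)
        (Complex.reCLM.comp ((ContinuousLinearMap.proj k).comp D)) p :=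
      Complex.reCLM.hasFDerivAt.comp p ((hasFDerivAt_pi'.1 hD) k)
    have h2 : HasFDerivAt (fun q : (Fin n → ℝ) × (Fin n → ℝ) => q.1 k)
        ((ContinuousLinearMap.proj (R := ℝ) (φ := fun _ : Fin n => ℝ) k).comp
          (ContinuousLinearMap.fst ℝ (Fin n → ℝ) (Fin n → ℝ))) p :=
      ((ContinuousLinearMap.proj (R := ℝ) (φ := fun _ : Fin n => ℝ) k).comp
        (ContinuousLinearMap.fst ℝ (Fin n → ℝ) (Fin n → ℝ))).hasFDerivAt
    have h3 := h2.congr_of_eventuallyEq (f₁ := fun q => (Ψ q k).re) (by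
      filter_upwards [hnhds] with q hq
      exact congrFun (congrArg Prod.fst (hΨinv q hq)) k)
    have h4 := congrArg (fun T => T w) (h1.unique h3)
    simpa using h4
  have hre2 : ∀ (k : Fin n) (w : (Fin n → ℝ) × (Fin n → ℝ)), (L (D w) k).re = w.2 k := by
    intro k w
    have h1 : HasFDerivAt (fun q => (gradF (Ψ q) k).re)
        (Complex.reCLM.comp ((ContinuousLinearMap.proj k).comp
          ((L.restrictScalars ℝ).comp D))) p :=
      Complex.reCLM.hasFDerivAt.comp p ((hasFDerivAt_pi'.1 hG) k)
    have h2 : HasFDerivAt (fun q : (Fin n → ℝ) × (Fin n → ℝ) => q.2 k)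
        ((ContinuousLinearMap.proj (R := ℝ) (φ := fun _ : Fin n => ℝ) k).comp
          (ContinuousLinearMap.snd ℝ (Fin n → ℝ) (Fin n → ℝ))) p :=
      ((ContinuousLinearMap.proj (R := ℝ) (φ := fun _ : Fin n => ℝ) k).comp
        (ContinuousLinearMap.snd ℝ (Fin n → ℝ) (Fin n → ℝ))).hasFDerivAt
    have h3 := h2.congr_of_eventuallyEq (f₁ := fun q => (gradF (Ψ q) k).re) (by
      filter_upwards [hnhds] with q hq
      exact congrFun (congrArg Prod.snd (hΨinv q hq)) k)
    have h4 := congrArg (fun T => T w) (h1.unique h3)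
    simpa using h4
  have him : ∀ k l : Fin n, pdx (fun q => (gradF (Ψ q) k).im) l p
      = (L (D (Pi.single l 1, 0)) k).im := by
    intro k l
    have h1 : HasFDerivAt (fun q => (gradF (Ψ q) k).im)
        (Complex.imCLM.comp ((ContinuousLinearMap.proj k).comp
          ((L.restrictScalars ℝ).comp D))) p :=
      Complex.imCLM.hasFDerivAt.comp p ((hasFDerivAt_pi'.1 hG) k)
    rw [pdx, h1.fderiv]
    simp
  rw [him, him]
  -- pairing with the other direction
  have hpair : ∀ a b : Fin n,
      (D (Pi.single a 1, 0) ⬝ᵥ L (D (Pi.single b 1, 0))).im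
        = (L (D (Pi.single b 1, 0)) a).im := by
    intro a b
    simp only [dotProduct, Complex.im_sum, Complex.mul_im, hre, hre2]
    simp [Pi.single_apply]
  rw [← hpair i j, ← hpair j i, hLX, hLX, Matrix.dotProduct_mulVec,
    ← Matrix.mulVec_transpose, (hsymm _ (hΨU p hp)).eq, dotProduct_comm]
end

section
/- With the notation of the coordinate setup: for every index i ∈ {1,…,n} and at every point (x,y) ∈ W, ∂/∂x^i ( Im F(Ψ(x,y)) ) = v_i(x,y) + Σ_{j=1}^n (∂u^j/∂x^i)(x,y) · y_j. -/
/-- `∂(Im F ∘ Ψ)/∂x^i = v_i + ∑_j (∂u^j/∂x^i) y_j` on `W`. -/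
theorem dx_imF
    {n : ℕ} (hn : 1 ≤ n) (U : Set (Fin n → ℂ)) (hU : IsOpen U)
    (F : (Fin n → ℂ) → ℂ) (gradF : (Fin n → ℂ) → (Fin n → ℂ))
    (hessF : (Fin n → ℂ) → Matrix (Fin n) (Fin n) ℂ)
    (hF : ∀ z ∈ U, ∃ L : (Fin n → ℂ) →L[ℂ] ℂ,
      HasFDerivAt F L z ∧ ∀ X, L X = ∑ k, gradF z k * X k)
    (hgrad : ∀ z ∈ U, ∃ L : (Fin n → ℂ) →L[ℂ] (Fin n → ℂ),
      HasFDerivAt gradF L z ∧ ∀ X, L X = (hessF z).mulVec X)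
    (hsymm : ∀ z ∈ U, (hessF z).IsSymm)
    (hnondeg : ∀ z ∈ U, IsUnit ((hessF z).map Complex.im))
    (W : Set ((Fin n → ℝ) × (Fin n → ℝ))) (hW : IsOpen W)
    (Ψ : (Fin n → ℝ) × (Fin n → ℝ) → (Fin n → ℂ))
    (hΨU : ∀ p ∈ W, Ψ p ∈ U)
    (hΨsmooth : ContDiffOn ℝ (⊤ : ℕ∞) Ψ W)
    (hΨinv : ∀ p ∈ W,
      ((fun i => (Ψ p i).re, fun i => (gradF (Ψ p) i).re) :
        (Fin n → ℝ) × (Fin n → ℝ)) = p) :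
    ∀ i : Fin n, ∀ p ∈ W,
      pdx (fun q => (F (Ψ q)).im) i p
        = (gradF (Ψ p) i).im + ∑ j, pdx (fun q => (Ψ q j).im) i p * p.2 j := by
  intro i p hp
  obtain ⟨L, hL, hLX⟩ := hF (Ψ p) (hΨU p hp)
  have hWp : W ∈ nhds p := hW.mem_nhds hp
  have hD : HasFDerivAt Ψ (fderiv ℝ Ψ p) p :=
    ((hΨsmooth.contDiffAt hWp).differentiableAt (by simp)).hasFDerivAt
  have hDj : ∀ j, HasFDerivAt (fun q => Ψ q j)
      ((ContinuousLinearMap.proj (R := ℝ) (φ := fun _ : Fin n => ℂ) j).comp (fderiv ℝ Ψ p)) p :=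
    fun j => (hasFDerivAt_pi'.1 hD) j
  have hIm : ∀ j, pdx (fun q => (Ψ q j).im) i p
      = (fderiv ℝ Ψ p (Pi.single i 1, 0) j).im := by
    intro j
    have h := Complex.imCLM.hasFDerivAt.comp p (hDj j)
    have h2 : fderiv ℝ (fun q => (Ψ q j).im) p = _ := h.fderiv
    unfold pdx
    rw [h2]
    rfl
  have hRe : ∀ j, (fderiv ℝ Ψ p (Pi.single i 1, 0) j).re
      = (Pi.single i 1 : Fin n → ℝ) j := by
    intro j
    have h := Complex.reCLM.hasFDerivAt.comp p (hDj j)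
    have h3 : HasFDerivAt (fun q : (Fin n → ℝ) × (Fin n → ℝ) => q.1 j)
        ((ContinuousLinearMap.proj (R := ℝ) (φ := fun _ : Fin n => ℝ) j).comp
          (ContinuousLinearMap.fst ℝ (Fin n → ℝ) (Fin n → ℝ))) p :=
      ((ContinuousLinearMap.proj (R := ℝ) (φ := fun _ : Fin n => ℝ) j).comp
          (ContinuousLinearMap.fst ℝ (Fin n → ℝ) (Fin n → ℝ))).hasFDerivAt
    have h4 := h3.congr_of_eventuallyEq (f₁ := Complex.reCLM ∘ fun q => Ψ q j) (by
      filter_upwards [hWp] with q hq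
      exact congrFun (congrArg Prod.fst (hΨinv q hq)) j)
    have h5 := congrArg (fun T => T (Pi.single i 1, 0)) (h.unique h4)
    exact h5
  have hmain : pdx (fun q => (F (Ψ q)).im) i p
      = (L (fderiv ℝ Ψ p (Pi.single i 1, 0))).im := by
    have h := Complex.imCLM.hasFDerivAt.comp p ((hL.restrictScalars ℝ).comp p hD)
    have h2 : fderiv ℝ (fun q => (F (Ψ q)).im) p = _ := h.fderiv
    unfold pdx
    rw [h2]
    rfl
  have hy : ∀ j, (gradF (Ψ p) j).re = p.2 j := fun j =>
    congrFun (congrArg Prod.snd (hΨinv p hp)) j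
  rw [hmain, hLX, Complex.im_sum]
  simp only [Complex.mul_im, hRe, hIm, hy, Finset.sum_add_distrib]
  simp [Pi.single_apply, add_comm, mul_comm]
end

section
/- With the notation of the coordinate setup: for every index j ∈ {1,…,n} and at every point (x,y) ∈ W, ∂/∂y_j ( Im F(Ψ(x,y)) ) = Σ_{k=1}^n (∂u^k/∂y_j)(x,y) · y_k. -/
/-- `∂(Im F ∘ Ψ)/∂y_j = ∑_k (∂u^k/∂y_j) y_k` on `W`. -/
theorem dy_imF
    {n : ℕ} (hn : 1 ≤ n) (U : Set (Fin n → ℂ)) (hU : IsOpen U)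
    (F : (Fin n → ℂ) → ℂ) (gradF : (Fin n → ℂ) → (Fin n → ℂ))
    (hessF : (Fin n → ℂ) → Matrix (Fin n) (Fin n) ℂ)
    (hF : ∀ z ∈ U, ∃ L : (Fin n → ℂ) →L[ℂ] ℂ,
      HasFDerivAt F L z ∧ ∀ X, L X = ∑ k, gradF z k * X k)
    (hgrad : ∀ z ∈ U, ∃ L : (Fin n → ℂ) →L[ℂ] (Fin n → ℂ),
      HasFDerivAt gradF L z ∧ ∀ X, L X = (hessF z).mulVec X)
    (hsymm : ∀ z ∈ U, (hessF z).IsSymm)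
    (hnondeg : ∀ z ∈ U, IsUnit ((hessF z).map Complex.im))
    (W : Set ((Fin n → ℝ) × (Fin n → ℝ))) (hW : IsOpen W)
    (Ψ : (Fin n → ℝ) × (Fin n → ℝ) → (Fin n → ℂ))
    (hΨU : ∀ p ∈ W, Ψ p ∈ U)
    (hΨsmooth : ContDiffOn ℝ (⊤ : ℕ∞) Ψ W)
    (hΨinv : ∀ p ∈ W,
      ((fun i => (Ψ p i).re, fun i => (gradF (Ψ p) i).re) :
        (Fin n → ℝ) × (Fin n → ℝ)) = p) :
    ∀ j : Fin n, ∀ p ∈ W,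
      pdy (fun q => (F (Ψ q)).im) j p
        = ∑ k, pdy (fun q => (Ψ q k).im) j p * p.2 k := by
  intro j p hp
  have hd : DifferentiableAt ℝ Ψ p :=
    (hΨsmooth.contDiffAt (hW.mem_nhds hp)).differentiableAt (by simp)
  obtain ⟨L, hL, hLX⟩ := hF (Ψ p) (hΨU p hp)
  have hΨ := hd.hasFDerivAt
  set D := fderiv ℝ Ψ p with hD
  have hk : ∀ k, HasFDerivAt (fun q => Ψ q k)
      ((ContinuousLinearMap.proj (R := ℝ) (φ := fun _ : Fin n => ℂ) k).comp D) p := fun k =>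
    (ContinuousLinearMap.proj (R := ℝ) (φ := fun _ : Fin n => ℂ) k).hasFDerivAt.comp p hΨ
  have him : ∀ k, pdy (fun q => (Ψ q k).im) j p = (D (0, Pi.single j 1) k).im := by
    intro k
    have h := Complex.imCLM.hasFDerivAt.comp p (hk k)
    have h2 : fderiv ℝ (fun q => (Ψ q k).im) p = _ := h.fderiv
    simp [pdy, h2]
  have hre : ∀ k, (D (0, Pi.single j 1) k).re = 0 := by
    intro k
    have h := Complex.reCLM.hasFDerivAt.comp p (hk k)
    have h3 : HasFDerivAt (fun q : (Fin n → ℝ) × (Fin n → ℝ) => q.1 k)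
        ((ContinuousLinearMap.proj (R := ℝ) (φ := fun _ : Fin n => ℝ) k).comp
          (ContinuousLinearMap.fst ℝ (Fin n → ℝ) (Fin n → ℝ))) p :=
      ((ContinuousLinearMap.proj (R := ℝ) (φ := fun _ : Fin n => ℝ) k).comp
          (ContinuousLinearMap.fst ℝ (Fin n → ℝ) (Fin n → ℝ))).hasFDerivAt
    have h4 := h3.congr_of_eventuallyEq (f₁ := Complex.reCLM ∘ fun q => Ψ q k) (by
      filter_upwards [hW.mem_nhds hp] with q hq
      exact congrFun (congrArg Prod.fst (hΨinv q hq)) k)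
    have h5 := congrArg (fun A => A (0, Pi.single j 1)) (h.unique h4)
    simpa using h5
  have hy : ∀ k, (gradF (Ψ p) k).re = p.2 k := fun k =>
    congrFun (congrArg Prod.snd (hΨinv p hp)) k
  have hFΨ := Complex.imCLM.hasFDerivAt.comp p ((hL.restrictScalars ℝ).comp p hΨ)
  have h2 : fderiv ℝ (fun q => (F (Ψ q)).im) p = _ := hFΨ.fderiv
  have h6 : pdy (fun q => (F (Ψ q)).im) j p = (L (D (0, Pi.single j 1))).im := by
    simp [pdy, h2]
  rw [h6, hLX, Complex.im_sum]
  refine Finset.sum_congr rfl fun k _ => ?_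
  rw [him, Complex.mul_im, hre, hy]
  ring
end

section
/- With the notation of the coordinate setup, define f : W → ℝ by f(x,y) = 2 Im F(Ψ(x,y)) − 2 Σ_{k=1}^n y_k u^k(x,y). Then for all i, j ∈ {1,…,n} and at every point of W: ∂²f/∂x^i∂x^j = 2 ∂v_i/∂x^j, ∂²f/∂x^i∂y_j = −2 ∂u^j/∂x^i, and ∂²f/∂y_i∂y_j = −2 ∂u^i/∂y_j. -/
/-- with `f = 2 Im F ∘ Ψ − 2 ∑_k y_k u^k`, on `W` one has `∂²f/∂x^i∂x^j = 2 ∂v_i/∂x^j`, `∂²f/∂x^i∂y_j = −2 ∂u^j/∂x^i` and `∂²f/∂y_i∂y_j = −2 ∂u^i/∂y_j`. -/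
theorem hessian_of_f
    {n : ℕ} (hn : 1 ≤ n) (U : Set (Fin n → ℂ)) (hU : IsOpen U)
    (F : (Fin n → ℂ) → ℂ) (gradF : (Fin n → ℂ) → (Fin n → ℂ))
    (hessF : (Fin n → ℂ) → Matrix (Fin n) (Fin n) ℂ)
    (hF : ∀ z ∈ U, ∃ L : (Fin n → ℂ) →L[ℂ] ℂ,
      HasFDerivAt F L z ∧ ∀ X, L X = ∑ k, gradF z k * X k)
    (hgrad : ∀ z ∈ U, ∃ L : (Fin n → ℂ) →L[ℂ] (Fin n → ℂ),
      HasFDerivAt gradF L z ∧ ∀ X, L X = (hessF z).mulVec X)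
    (hsymm : ∀ z ∈ U, (hessF z).IsSymm)
    (hnondeg : ∀ z ∈ U, IsUnit ((hessF z).map Complex.im))
    (W : Set ((Fin n → ℝ) × (Fin n → ℝ))) (hW : IsOpen W)
    (Ψ : (Fin n → ℝ) × (Fin n → ℝ) → (Fin n → ℂ))
    (hΨU : ∀ p ∈ W, Ψ p ∈ U)
    (hΨsmooth : ContDiffOn ℝ (⊤ : ℕ∞) Ψ W)
    (hΨinv : ∀ p ∈ W,
      ((fun i => (Ψ p i).re, fun i => (gradF (Ψ p) i).re) :
        (Fin n → ℝ) × (Fin n → ℝ)) = p)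
    (f : (Fin n → ℝ) × (Fin n → ℝ) → ℝ)
    (hf : ∀ q, f q = 2 * (F (Ψ q)).im - 2 * ∑ k, q.2 k * (Ψ q k).im) :
    ∀ i j : Fin n, ∀ p ∈ W,
      pdx (fun q => pdx f j q) i p = 2 * pdx (fun q => (gradF (Ψ q) i).im) j p ∧
      pdx (fun q => pdy f j q) i p = -2 * pdx (fun q => (Ψ q j).im) i p ∧
      pdy (fun q => pdy f j q) i p = -2 * pdy (fun q => (Ψ q i).im) j p := by
  have hΨd : ∀ q ∈ W, DifferentiableAt ℝ Ψ q := fun q hq =>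
    (hΨsmooth.differentiableOn (by simp)).differentiableAt (hW.mem_nhds hq)
  have hud : ∀ q ∈ W, ∀ k, DifferentiableAt ℝ (fun q => (Ψ q k).im) q := by
    intro q hq k
    have h1 : DifferentiableAt ℝ (fun q => Ψ q k) q := differentiableAt_pi.1 (hΨd q hq) k
    exact Complex.imCLM.differentiableAt.comp q h1
  have hvd : ∀ q ∈ W, ∀ k, DifferentiableAt ℝ (fun q => (gradF (Ψ q) k).im) q := by
    intro q hq k
    obtain ⟨L, hL, -⟩ := hgrad (Ψ q) (hΨU q hq)
    have h0 : DifferentiableAt ℝ (fun q => gradF (Ψ q)) q :=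
      (hL.restrictScalars ℝ).differentiableAt.comp q (hΨd q hq)
    have h1 : DifferentiableAt ℝ (fun q => gradF (Ψ q) k) q := differentiableAt_pi.1 h0 k
    exact Complex.imCLM.differentiableAt.comp q h1
  let ax : Fin n → ((Fin n → ℝ) × (Fin n → ℝ)) →L[ℝ] ℝ := fun k =>
    (ContinuousLinearMap.proj k).comp (ContinuousLinearMap.fst ℝ (Fin n → ℝ) (Fin n → ℝ))
  let ay : Fin n → ((Fin n → ℝ) × (Fin n → ℝ)) →L[ℝ] ℝ := fun k =>
    (ContinuousLinearMap.proj k).comp (ContinuousLinearMap.snd ℝ (Fin n → ℝ) (Fin n → ℝ))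
  let f' : (Fin n → ℝ) × (Fin n → ℝ) → ((Fin n → ℝ) × (Fin n → ℝ)) →L[ℝ] ℝ := fun q =>
    ∑ k, ((2 * (gradF (Ψ q) k).im) • ax k - (2 * (Ψ q k).im) • ay k)
  have hfd : ∀ q ∈ W, HasFDerivAt f (f' q) q := by
    intro q hq
    obtain ⟨L, hL, hLX⟩ := hF (Ψ q) (hΨU q hq)
    have hΨ' := (hΨd q hq).hasFDerivAt
    set D := fderiv ℝ Ψ q with hD
    have hFc : HasFDerivAt (fun q => (F (Ψ q)).im)
        (Complex.imCLM.comp ((L.restrictScalars ℝ).comp D)) q :=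
      Complex.imCLM.hasFDerivAt.comp q ((hL.restrictScalars ℝ).comp q hΨ')
    have hΨk : ∀ k, HasFDerivAt (fun q => Ψ q k) ((ContinuousLinearMap.proj k).comp D) q :=
      fun k => hasFDerivAt_pi'.1 hΨ' k
    have huk : ∀ k, HasFDerivAt (fun q => (Ψ q k).im)
        (Complex.imCLM.comp ((ContinuousLinearMap.proj k).comp D)) q :=
      fun k => Complex.imCLM.hasFDerivAt.comp q (hΨk k)
    have hrk : ∀ k, HasFDerivAt (fun q => (Ψ q k).re)
        (Complex.reCLM.comp ((ContinuousLinearMap.proj k).comp D)) q :=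
      fun k => Complex.reCLM.hasFDerivAt.comp q (hΨk k)
    have hyk : ∀ k, HasFDerivAt (fun q : (Fin n → ℝ) × (Fin n → ℝ) => q.2 k) (ay k) q :=
      fun k => (ay k).hasFDerivAt
    have hxk : ∀ k, HasFDerivAt (fun q : (Fin n → ℝ) × (Fin n → ℝ) => q.1 k) (ax k) q :=
      fun k => (ax k).hasFDerivAt
    have hre : ∀ k X, (D X k).re = X.1 k := by
      intro k X
      have he : (fun q => (Ψ q k).re) =ᶠ[nhds q] fun q => q.1 k := by
        filter_upwards [hW.mem_nhds hq] with r hr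
        exact congrFun (congrArg Prod.fst (hΨinv r hr)) k
      have := (hrk k).unique ((hxk k).congr_of_eventuallyEq he)
      exact DFunLike.congr_fun this X
    have hgy : ∀ k, (gradF (Ψ q) k).re = q.2 k := fun k =>
      congrFun (congrArg Prod.snd (hΨinv q hq)) k
    have hmain := (hFc.const_mul 2).sub
      ((HasFDerivAt.fun_sum (u := Finset.univ) fun k _ => (hyk k).mul (huk k)).const_mul 2)
    have hfe : f = fun q => 2 * (F (Ψ q)).im - 2 * ∑ k, q.2 k * (Ψ q k).im := funext hf
    rw [hfe]
    refine hmain.congr_fderiv ?_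
    refine ContinuousLinearMap.ext fun X => ?_
    simp only [f', ax, ay, ContinuousLinearMap.sub_apply, ContinuousLinearMap.smul_apply,
      ContinuousLinearMap.comp_apply, sum_apply, ContinuousLinearMap.add_apply,
      ContinuousLinearMap.coe_restrictScalars', hLX, Complex.imCLM_apply, Complex.im_sum,
      Complex.mul_im, hre, hgy, ContinuousLinearMap.proj_apply, smul_eq_mul,
      ContinuousLinearMap.coe_fst', ContinuousLinearMap.coe_snd', Finset.mul_sum,
      ← Finset.sum_sub_distrib]
    refine Finset.sum_congr rfl fun k _ => ?_
    ring
  have hx : ∀ q ∈ W, ∀ j, pdx f j q = 2 * (gradF (Ψ q) j).im := by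
    intro q hq j
    rw [pdx, (hfd q hq).fderiv]
    simp [f', ax, ay, Pi.single_apply]
  have hy : ∀ q ∈ W, ∀ j, pdy f j q = -2 * (Ψ q j).im := by
    intro q hq j
    rw [pdy, (hfd q hq).fderiv]
    simp [f', ax, ay, Pi.single_apply]
  intro i j p hp
  have hWp := hW.mem_nhds hp
  have hf'd : DifferentiableAt ℝ f' p := by
    refine DifferentiableAt.fun_sum fun k _ => ?_
    exact (((hvd p hp k).const_mul 2).smul_const (ax k)).sub
      (((hud p hp k).const_mul 2).smul_const (ay k))
  have hsym := second_derivative_symmetric_of_eventually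
    (Filter.eventually_of_mem hWp hfd) hf'd.hasFDerivAt
  have hDx : ∀ j, fderiv ℝ (fun q => pdx f j q) p =
      (2 : ℝ) • fderiv ℝ (fun q => (gradF (Ψ q) j).im) p := by
    intro j
    rw [← fderiv_const_mul (hvd p hp j)]
    exact Filter.EventuallyEq.fderiv_eq (Filter.eventually_of_mem hWp fun q hq => hx q hq j)
  have hDy : ∀ j, fderiv ℝ (fun q => pdy f j q) p =
      (-2 : ℝ) • fderiv ℝ (fun q => (Ψ q j).im) p := by
    intro j
    rw [← fderiv_const_mul (hud p hp j)]
    exact Filter.EventuallyEq.fderiv_eq (Filter.eventually_of_mem hWp fun q hq => hy q hq j)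
  have hap : ∀ w X, fderiv ℝ (fun q => fderiv ℝ f q w) p X = fderiv ℝ f' p X w := by
    intro w X
    have he : (fun q => fderiv ℝ f q w) =ᶠ[nhds p] fun q => f' q w :=
      Filter.eventually_of_mem hWp fun q hq => by
        change fderiv ℝ f q w = f' q w
        rw [(hfd q hq).fderiv]
    rw [he.fderiv_eq]
    have := hf'd.hasFDerivAt.clm_apply (hasFDerivAt_const w p)
    rw [this.fderiv]
    simp
  refine ⟨?_, ?_, ?_⟩
  · have h1 : pdx (fun q => pdx f j q) i p = pdx (fun q => pdx f i q) j p := by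
      unfold pdx
      rw [hap, hap, hsym]
    rw [h1, pdx, hDx]
    rfl
  · rw [pdx, hDy]
    rfl
  · have h1 : pdy (fun q => pdy f j q) i p = pdy (fun q => pdy f i q) j p := by
      unfold pdy
      rw [hap, hap, hsym]
    rw [h1, pdy, hDy]
    rfl
end

section
/- With the notation of the coordinate setup, define f : W → ℝ by f(x,y) = 2 Im F(Ψ(x,y)) − 2 Σ_{k=1}^n y_k u^k(x,y), and at a point p ∈ W let G be the 2n×2n Hessian matrix of f (in the coordinates (x¹,…,xⁿ,y₁,…,y_n)) and let H be the symmetric 2n×2n matrix with blocks H_{x^i x^j} = −(1/2) ∂u^i/∂y_j, H_{x^i y_j} = H_{y_j x^i} = (1/2) ∂u^i/∂x^j, and H_{y_i y_j} = (1/2) ∂v_i/∂x^j, all evaluated at p. Then H·G = I_{2n}, i.e. H is the inverse of the Hessian matrix of f at p. -/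
open Matrix in
theorem ihf_key {n : ℕ} (U : Set (Fin n → ℂ))
    (F : (Fin n → ℂ) → ℂ) (gradF : (Fin n → ℂ) → (Fin n → ℂ))
    (hessF : (Fin n → ℂ) → Matrix (Fin n) (Fin n) ℂ)
    (hF : ∀ z ∈ U, ∃ L : (Fin n → ℂ) →L[ℂ] ℂ,
      HasFDerivAt F L z ∧ ∀ X, L X = ∑ k, gradF z k * X k)
    (hgrad : ∀ z ∈ U, ∃ L : (Fin n → ℂ) →L[ℂ] (Fin n → ℂ),
      HasFDerivAt gradF L z ∧ ∀ X, L X = (hessF z).mulVec X)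
    (hnondeg : ∀ z ∈ U, IsUnit ((hessF z).map Complex.im))
    (W : Set ((Fin n → ℝ) × (Fin n → ℝ))) (hW : IsOpen W)
    (Ψ : (Fin n → ℝ) × (Fin n → ℝ) → (Fin n → ℂ))
    (hΨU : ∀ p ∈ W, Ψ p ∈ U)
    (hΨsmooth : ContDiffOn ℝ (⊤ : ℕ∞) Ψ W)
    (hΨinv : ∀ p ∈ W,
      ((fun i => (Ψ p i).re, fun i => (gradF (Ψ p) i).re) :
        (Fin n → ℝ) × (Fin n → ℝ)) = p)
    (f : (Fin n → ℝ) × (Fin n → ℝ) → ℝ)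
    (hf : ∀ q, f q = 2 * (F (Ψ q)).im - 2 * ∑ k, q.2 k * (Ψ q k).im)
    (q : (Fin n → ℝ) × (Fin n → ℝ)) (hq : q ∈ W) :
    (∀ i, DifferentiableAt ℝ (fun q => (Ψ q i).im) q) ∧
    (∀ i, DifferentiableAt ℝ (fun q => (gradF (Ψ q) i).im) q) ∧
    (∀ w i, fderiv ℝ (fun q => (Ψ q i).im) q w =
      (((hessF (Ψ q)).map Complex.im)⁻¹ *ᵥ
        ((hessF (Ψ q)).map Complex.re *ᵥ w.1 - w.2)) i) ∧
    (∀ w i, fderiv ℝ (fun q => (gradF (Ψ q) i).im) q w =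
      ((hessF (Ψ q)).map Complex.im *ᵥ w.1 + (hessF (Ψ q)).map Complex.re *ᵥ
       (((hessF (Ψ q)).map Complex.im)⁻¹ *ᵥ
        ((hessF (Ψ q)).map Complex.re *ᵥ w.1 - w.2))) i) ∧
    (∀ w, fderiv ℝ f q w = ∑ k, (2 * (gradF (Ψ q) k).im * w.1 k - 2 * (Ψ q k).im * w.2 k)) := by
  have hD : HasFDerivAt Ψ (fderiv ℝ Ψ q) q :=
    ((hΨsmooth.contDiffAt (hW.mem_nhds hq)).differentiableAt (by simp)).hasFDerivAt
  set D := fderiv ℝ Ψ q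
  have hDi : ∀ i, HasFDerivAt (fun q => Ψ q i) ((ContinuousLinearMap.proj i).comp D) q :=
    fun i => hasFDerivAt_pi'.1 hD i
  obtain ⟨L, hL, hLX⟩ := hgrad _ (hΨU q hq)
  obtain ⟨K, hK, hKX⟩ := hF _ (hΨU q hq)
  have hE := (hL.restrictScalars ℝ).comp q hD
  have hEi := fun i => hasFDerivAt_pi'.1 hE i
  have hFD := (hK.restrictScalars ℝ).comp q hD
  have him : ∀ i, HasFDerivAt (fun q => (Ψ q i).im) _ q :=
    fun i => (Complex.imCLM.hasFDerivAt (x := Ψ q i)).comp q (hDi i)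
  have hre : ∀ i, HasFDerivAt (fun q => (Ψ q i).re) _ q :=
    fun i => (Complex.reCLM.hasFDerivAt (x := Ψ q i)).comp q (hDi i)
  have hgim : ∀ i, HasFDerivAt (fun q => (gradF (Ψ q) i).im) _ q :=
    fun i => (Complex.imCLM.hasFDerivAt (x := gradF (Ψ q) i)).comp q (hEi i)
  have hgre : ∀ i, HasFDerivAt (fun q => (gradF (Ψ q) i).re) _ q :=
    fun i => (Complex.reCLM.hasFDerivAt (x := gradF (Ψ q) i)).comp q (hEi i)
  have hFim : HasFDerivAt (fun q => (F (Ψ q)).im) _ q :=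
    (Complex.imCLM.hasFDerivAt (x := F (Ψ q))).comp q hFD
  have e1 : ∀ w i, (D w i).re = w.1 i := by
    intro w i
    have h1 : (fun q => (Ψ q i).re) =ᶠ[nhds q] fun q => q.1 i := by
      filter_upwards [hW.mem_nhds hq] with r hr
      exact congrFun (congrArg Prod.fst (hΨinv r hr)) i
    have h2 : HasFDerivAt (fun q : (Fin n → ℝ) × (Fin n → ℝ) => q.1 i)
      ((ContinuousLinearMap.proj (R := ℝ) (φ := fun _ : Fin n => ℝ) i).comp
        (ContinuousLinearMap.fst ℝ (Fin n → ℝ) (Fin n → ℝ))) q :=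
      ((ContinuousLinearMap.proj (R := ℝ) (φ := fun _ : Fin n => ℝ) i).comp
        (ContinuousLinearMap.fst ℝ (Fin n → ℝ) (Fin n → ℝ))).hasFDerivAt
    have h3 := (hre i).unique (h2.congr_of_eventuallyEq h1)
    exact DFunLike.congr_fun h3 w
  have hy : ∀ i, HasFDerivAt (fun q : (Fin n → ℝ) × (Fin n → ℝ) => q.2 i)
      ((ContinuousLinearMap.proj (R := ℝ) (φ := fun _ : Fin n => ℝ) i).comp
        (ContinuousLinearMap.snd ℝ (Fin n → ℝ) (Fin n → ℝ))) q :=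
    fun i => ((ContinuousLinearMap.proj (R := ℝ) (φ := fun _ : Fin n => ℝ) i).comp
        (ContinuousLinearMap.snd ℝ (Fin n → ℝ) (Fin n → ℝ))).hasFDerivAt
  have e2 : ∀ w i, (L (D w) i).re = w.2 i := by
    intro w i
    have h1 : (fun q => (gradF (Ψ q) i).re) =ᶠ[nhds q] fun q => q.2 i := by
      filter_upwards [hW.mem_nhds hq] with r hr
      exact congrFun (congrArg Prod.snd (hΨinv r hr)) i
    have h3 := (hgre i).unique ((hy i).congr_of_eventuallyEq h1)
    exact DFunLike.congr_fun h3 w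
  set A := (hessF (Ψ q)).map Complex.re with hA
  set B := (hessF (Ψ q)).map Complex.im with hB
  have hBu : IsUnit B.det := (Matrix.isUnit_iff_isUnit_det _).1 (hnondeg _ (hΨU q hq))
  have e3 : ∀ w, (fun i => (D w i).im) = B⁻¹ *ᵥ (A *ᵥ w.1 - w.2) := by
    intro w
    have : B *ᵥ (fun i => (D w i).im) = A *ᵥ w.1 - w.2 := by
      ext i
      have := e2 w i
      rw [hLX] at this
      simp only [mulVec, dotProduct, Complex.re_sum, Complex.mul_re, e1, Finset.sum_sub_distrib] at this
      simp only [mulVec, dotProduct, Pi.sub_apply, hA, hB, Matrix.map_apply]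
      linarith
    rw [← this, mulVec_mulVec, Matrix.nonsing_inv_mul _ hBu, one_mulVec]
  have e4 : ∀ w, (fun i => (L (D w) i).im) = B *ᵥ w.1 + A *ᵥ (B⁻¹ *ᵥ (A *ᵥ w.1 - w.2)) := by
    intro w
    rw [← e3]
    ext i
    rw [hLX]
    simp only [mulVec, dotProduct, Complex.im_sum, Complex.mul_im, e1, Finset.sum_add_distrib,
      Pi.add_apply, hA, hB, Matrix.map_apply]
    ring
  refine ⟨fun i => (him i).differentiableAt, fun i => (hgim i).differentiableAt, ?_, ?_, ?_⟩
  · intro w i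
    rw [(him i).fderiv]
    exact congrFun (e3 w) i
  · intro w i
    rw [(hgim i).fderiv]
    exact congrFun (e4 w) i
  · intro w
    have hff : f = fun q => 2 * (F (Ψ q)).im - 2 * ∑ k, q.2 k * (Ψ q k).im := funext hf
    have hs := HasFDerivAt.fun_sum (𝕜 := ℝ) (u := Finset.univ) (fun k _ => (hy k).mul (him k))
    have hT := (hFim.const_mul (2 : ℝ)).sub (hs.const_mul (2 : ℝ))
    rw [hff]
    refine (DFunLike.congr_fun hT.fderiv w).trans ?_
    have hq2 : ∀ k, (gradF (Ψ q) k).re = q.2 k := fun k =>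
      congrFun (congrArg Prod.snd (hΨinv q hq)) k
    simp [hKX, Complex.mul_im, e1, hq2]
    simp only [Finset.mul_sum, ← Finset.sum_sub_distrib]
    refine Finset.sum_congr rfl fun k _ => ?_
    ring

/-- with `f = 2 Im F ∘ Ψ − 2 ∑_k y_k u^k`, the matrix `H` with blocks `H_{x^i x^j} = −(1/2) ∂u^i/∂y_j`, `H_{x^i y_j} = H_{y_j x^i} = (1/2) ∂u^i/∂x^j`, `H_{y_i y_j} = (1/2) ∂v_i/∂x^j` is the inverse of the coordinate Hessian matrix `G` of `f`: `H · G = 1`. -/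
theorem inverse_hessian_of_f
    {n : ℕ} (hn : 1 ≤ n) (U : Set (Fin n → ℂ)) (hU : IsOpen U)
    (F : (Fin n → ℂ) → ℂ) (gradF : (Fin n → ℂ) → (Fin n → ℂ))
    (hessF : (Fin n → ℂ) → Matrix (Fin n) (Fin n) ℂ)
    (hF : ∀ z ∈ U, ∃ L : (Fin n → ℂ) →L[ℂ] ℂ,
      HasFDerivAt F L z ∧ ∀ X, L X = ∑ k, gradF z k * X k)
    (hgrad : ∀ z ∈ U, ∃ L : (Fin n → ℂ) →L[ℂ] (Fin n → ℂ),
      HasFDerivAt gradF L z ∧ ∀ X, L X = (hessF z).mulVec X)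
    (hsymm : ∀ z ∈ U, (hessF z).IsSymm)
    (hnondeg : ∀ z ∈ U, IsUnit ((hessF z).map Complex.im))
    (W : Set ((Fin n → ℝ) × (Fin n → ℝ))) (hW : IsOpen W)
    (Ψ : (Fin n → ℝ) × (Fin n → ℝ) → (Fin n → ℂ))
    (hΨU : ∀ p ∈ W, Ψ p ∈ U)
    (hΨsmooth : ContDiffOn ℝ (⊤ : ℕ∞) Ψ W)
    (hΨinv : ∀ p ∈ W,
      ((fun i => (Ψ p i).re, fun i => (gradF (Ψ p) i).re) :
        (Fin n → ℝ) × (Fin n → ℝ)) = p)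
    (f : (Fin n → ℝ) × (Fin n → ℝ) → ℝ)
    (hf : ∀ q, f q = 2 * (F (Ψ q)).im - 2 * ∑ k, q.2 k * (Ψ q k).im) :
    ∀ p ∈ W,
      (Matrix.of fun a b : Fin n ⊕ Fin n =>
          match a, b with
          | Sum.inl i, Sum.inl j => -(1/2) * pdy (fun q => (Ψ q i).im) j p
          | Sum.inl i, Sum.inr j => (1/2) * pdx (fun q => (Ψ q i).im) j p
          | Sum.inr i, Sum.inl j => (1/2) * pdx (fun q => (Ψ q j).im) i p
          | Sum.inr i, Sum.inr j => (1/2) * pdx (fun q => (gradF (Ψ q) i).im) j p) *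
        (Matrix.of fun a b : Fin n ⊕ Fin n =>
          Sum.elim (fun i => pdx (fun q => Sum.elim (fun j => pdx f j q) (fun j => pdy f j q) b) i p)
                   (fun i => pdy (fun q => Sum.elim (fun j => pdx f j q) (fun j => pdy f j q) b) i p) a)
      = (1 : Matrix (Fin n ⊕ Fin n) (Fin n ⊕ Fin n) ℝ) := by
  intro p hp
  have key := ihf_key U F gradF hessF hF hgrad hnondeg W hW Ψ hΨU hΨsmooth hΨinv f hf
  have gx : ∀ j, (fun q => pdx f j q) =ᶠ[nhds p] fun q => 2 * (gradF (Ψ q) j).im := by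
    intro j
    filter_upwards [hW.mem_nhds hp] with q hq
    simp [pdx, (key q hq).2.2.2.2, Pi.single_apply]
  have gy : ∀ j, (fun q => pdy f j q) =ᶠ[nhds p] fun q => (-2) * (Ψ q j).im := by
    intro j
    filter_upwards [hW.mem_nhds hp] with q hq
    simp [pdy, (key q hq).2.2.2.2, Pi.single_apply]
  obtain ⟨d1, d2, hu, hv, -⟩ := key p hp
  have hxx : ∀ i j, pdx (fun q => pdx f j q) i p = 2 * pdx (fun q => (gradF (Ψ q) j).im) i p := by
    intro i j
    unfold pdx at gx ⊢
    rw [(gx j).fderiv_eq, fderiv_const_mul (d2 j)]; rfl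
  have hyx : ∀ i j, pdy (fun q => pdx f j q) i p = 2 * pdy (fun q => (gradF (Ψ q) j).im) i p := by
    intro i j
    unfold pdy
    rw [(gx j).fderiv_eq, fderiv_const_mul (d2 j)]; rfl
  have hxy : ∀ i j, pdx (fun q => pdy f j q) i p = (-2) * pdx (fun q => (Ψ q j).im) i p := by
    intro i j
    unfold pdx
    rw [(gy j).fderiv_eq, fderiv_const_mul (d1 j)]; rfl
  have hyy : ∀ i j, pdy (fun q => pdy f j q) i p = (-2) * pdy (fun q => (Ψ q j).im) i p := by
    intro i j
    unfold pdy at gy ⊢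
    rw [(gy j).fderiv_eq, fderiv_const_mul (d1 j)]; rfl
  have hs := hsymm _ (hΨU p hp)
  have hBu : IsUnit ((hessF (Ψ p)).map Complex.im).det :=
    (Matrix.isUnit_iff_isUnit_det _).1 (hnondeg _ (hΨU p hp))
  have hAs : ((hessF (Ψ p)).map Complex.re).transpose = (hessF (Ψ p)).map Complex.re := by
    rw [← Matrix.transpose_map, hs.eq]
  have hBs : ((hessF (Ψ p)).map Complex.im).transpose = (hessF (Ψ p)).map Complex.im := by
    rw [← Matrix.transpose_map, hs.eq]
  generalize (hessF (Ψ p)).map Complex.re = A at *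
  generalize (hessF (Ψ p)).map Complex.im = B at *
  have ux : ∀ i j, pdx (fun q => (Ψ q i).im) j p = (B⁻¹ * A) i j := by
    intro i j
    simp [pdx, hu]; rfl
  have uy : ∀ i j, pdy (fun q => (Ψ q i).im) j p = - B⁻¹ i j := by
    intro i j
    simp [pdy, hu, Matrix.mulVec_neg]
  have vx : ∀ i j, pdx (fun q => (gradF (Ψ q) i).im) j p = (B + A * B⁻¹ * A) i j := by
    intro i j
    simp [pdx, hv]; rfl
  have vy : ∀ i j, pdy (fun q => (gradF (Ψ q) i).im) j p = - (A * B⁻¹) i j := by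
    intro i j
    simp [pdy, hv, Matrix.mulVec_neg]; rfl
  have hBis : B⁻¹.transpose = B⁻¹ := by rw [Matrix.transpose_nonsing_inv, hBs]
  have t1 : ∀ i j, (B⁻¹ * A) i j = (A * B⁻¹) j i := by
    intro i j
    rw [← Matrix.transpose_apply (A * B⁻¹), Matrix.transpose_mul, hBis, hAs]
  have t2 : ∀ i j, (B + A * B⁻¹ * A) i j = (B + A * B⁻¹ * A) j i := by
    intro i j
    conv_rhs => rw [← Matrix.transpose_apply (B + A * B⁻¹ * A)]
    simp only [Matrix.transpose_add, Matrix.transpose_mul, hBis, hAs, hBs, Matrix.mul_assoc]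
  have t3 : ∀ i j, B⁻¹ i j = B⁻¹ j i := by
    intro i j
    conv_rhs => rw [← Matrix.transpose_apply B⁻¹, hBis]
  have hbi := Matrix.nonsing_inv_mul _ hBu
  have hib := Matrix.mul_nonsing_inv _ hBu
  have e1 : (Matrix.fromBlocks ((1/2 : ℝ) • B⁻¹) ((1/2 : ℝ) • (B⁻¹ * A)) ((1/2 : ℝ) • (A * B⁻¹))
      ((1/2 : ℝ) • (B + A * B⁻¹ * A))) * (Matrix.fromBlocks ((2 : ℝ) • (B + A * B⁻¹ * A))
      ((-2 : ℝ) • (A * B⁻¹)) ((-2 : ℝ) • (B⁻¹ * A)) ((2 : ℝ) • B⁻¹)) = 1 := by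
    rw [Matrix.fromBlocks_multiply, ← Matrix.fromBlocks_one]
    simp only [Matrix.smul_mul, Matrix.mul_smul, smul_smul, smul_add, Matrix.mul_add, Matrix.add_mul,
      Matrix.mul_assoc, hbi, hib, Matrix.mul_one]
    rw [← Matrix.mul_assoc B B⁻¹ A, hib, Matrix.one_mul]
    norm_num
    abel_nf
    simp
  rw [← e1]
  congr 1
  · ext a b
    rcases a with i | i <;> rcases b with j | j
    · simp [uy]
    · simp [ux]
    · simp [ux, t1]
    · simp [vx, mul_add]
  · ext a b
    rcases a with i | i <;> rcases b with j | j
    · simp only [Matrix.of_apply, Sum.elim_inl, Sum.elim_inr, hxx, vx, t2 j i]; simp [mul_add]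
    · simp only [Matrix.of_apply, Sum.elim_inl, Sum.elim_inr, hxy, ux, t1 j i]; simp
    · simp only [Matrix.of_apply, Sum.elim_inl, Sum.elim_inr, hyx, vy, ← t1 i j]; simp
    · simp only [Matrix.of_apply, Sum.elim_inl, Sum.elim_inr, hyy, uy, t3 j i]; simp
end

section
/- With the notation of the coordinate setup, define f : W → ℝ by f(x,y) = 2 Im F(Ψ(x,y)) − 2 Σ_{k=1}^n y_k u^k(x,y). Then for every p ∈ W and all vectors w, w' ∈ ℝⁿ × ℝⁿ, the second Fréchet derivative of f satisfies D²f(p)[w, w'] = 2 Re( Σ_{k,l} X_k · (Im HF(Ψ(p)))_{kl} · conj(X'_l) ), where X = DΨ(p)w ∈ ℂⁿ and X' = DΨ(p)w' ∈ ℂⁿ are the images of w, w' under the real Fréchet derivative of Ψ at p. -/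
/-- with `f = 2 Im F ∘ Ψ − 2 ∑_k y_k u^k`, the second Fréchet derivative of `f` satisfies `D²f(p)[w,w'] = 2 Re(∑_{k,l} X_k (Im HF(Ψ(p)))_{kl} conj(X'_l))` where `X = DΨ(p)w`, `X' = DΨ(p)w'`. -/
theorem second_derivative_f_eq_metric
    {n : ℕ} (hn : 1 ≤ n) (U : Set (Fin n → ℂ)) (hU : IsOpen U)
    (F : (Fin n → ℂ) → ℂ) (gradF : (Fin n → ℂ) → (Fin n → ℂ))
    (hessF : (Fin n → ℂ) → Matrix (Fin n) (Fin n) ℂ)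
    (hF : ∀ z ∈ U, ∃ L : (Fin n → ℂ) →L[ℂ] ℂ,
      HasFDerivAt F L z ∧ ∀ X, L X = ∑ k, gradF z k * X k)
    (hgrad : ∀ z ∈ U, ∃ L : (Fin n → ℂ) →L[ℂ] (Fin n → ℂ),
      HasFDerivAt gradF L z ∧ ∀ X, L X = (hessF z).mulVec X)
    (hsymm : ∀ z ∈ U, (hessF z).IsSymm)
    (hnondeg : ∀ z ∈ U, IsUnit ((hessF z).map Complex.im))
    (W : Set ((Fin n → ℝ) × (Fin n → ℝ))) (hW : IsOpen W)
    (Ψ : (Fin n → ℝ) × (Fin n → ℝ) → (Fin n → ℂ))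
    (hΨU : ∀ p ∈ W, Ψ p ∈ U)
    (hΨsmooth : ContDiffOn ℝ (⊤ : ℕ∞) Ψ W)
    (hΨinv : ∀ p ∈ W,
      ((fun i => (Ψ p i).re, fun i => (gradF (Ψ p) i).re) :
        (Fin n → ℝ) × (Fin n → ℝ)) = p)
    (f : (Fin n → ℝ) × (Fin n → ℝ) → ℝ)
    (hf : ∀ q, f q = 2 * (F (Ψ q)).im - 2 * ∑ k, q.2 k * (Ψ q k).im) :
    ∀ p ∈ W, ∀ w w' : (Fin n → ℝ) × (Fin n → ℝ),
      fderiv ℝ (fun q => fderiv ℝ f q w') p w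
        = 2 * (∑ k, ∑ l, (fderiv ℝ Ψ p w k) * (((hessF (Ψ p)) k l).im : ℂ) *
            (starRingEnd ℂ) (fderiv ℝ Ψ p w' l)).re := by
  intro p hp w w'
  have hdΨ : ∀ q ∈ W, HasFDerivAt Ψ (fderiv ℝ Ψ q) q := fun q hq =>
    ((hΨsmooth.contDiffAt (hW.mem_nhds hq)).differentiableAt (by simp)).hasFDerivAt
  have hk : ∀ q ∈ W, ∀ k, HasFDerivAt (fun r => Ψ r k)
      ((ContinuousLinearMap.proj (R := ℝ) (φ := fun _ : Fin n => ℂ) k).comp (fderiv ℝ Ψ q)) q :=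
    fun q hq k => (ContinuousLinearMap.proj (R := ℝ) (φ := fun _ : Fin n => ℂ)
      k).hasFDerivAt.comp q (hdΨ q hq)
  have hre : ∀ q ∈ W, ∀ v k, (fderiv ℝ Ψ q v k).re = v.1 k := by
    intro q hq v k
    have h1 := Complex.reCLM.hasFDerivAt.comp q (hk q hq k)
    have h2 : HasFDerivAt (fun r : (Fin n → ℝ) × (Fin n → ℝ) => r.1 k)
      ((ContinuousLinearMap.proj (R := ℝ) (φ := fun _ : Fin n => ℝ) k).comp
        (ContinuousLinearMap.fst ℝ _ _)) q :=
      ((ContinuousLinearMap.proj (R := ℝ) (φ := fun _ : Fin n => ℝ) k).comp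
        (ContinuousLinearMap.fst ℝ (Fin n → ℝ) (Fin n → ℝ))).hasFDerivAt
    have h3 := h2.congr_of_eventuallyEq (f₁ := Complex.reCLM ∘ fun r => Ψ r k) (by
      filter_upwards [hW.mem_nhds hq] with r hr
      exact congrFun (congrArg Prod.fst (hΨinv r hr)) k)
    exact DFunLike.congr_fun (h1.unique h3) v
  have hg : ∀ q ∈ W, ∃ M : ((Fin n → ℝ) × (Fin n → ℝ)) →L[ℝ] (Fin n → ℂ),
      HasFDerivAt (fun r => gradF (Ψ r)) M q ∧
      ∀ v, M v = (hessF (Ψ q)).mulVec (fderiv ℝ Ψ q v) := by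
    intro q hq
    obtain ⟨L, hL, hLe⟩ := hgrad (Ψ q) (hΨU q hq)
    exact ⟨_, (hL.restrictScalars ℝ).comp q (hdΨ q hq), fun v => hLe _⟩
  have hgk : ∀ q ∈ W, ∀ k, ∃ M : ((Fin n → ℝ) × (Fin n → ℝ)) →L[ℝ] ℂ,
      HasFDerivAt (fun r => gradF (Ψ r) k) M q ∧
      ∀ v, M v = (hessF (Ψ q)).mulVec (fderiv ℝ Ψ q v) k := by
    intro q hq k
    obtain ⟨M, hM, hMe⟩ := hg q hq
    exact ⟨_, (ContinuousLinearMap.proj (R := ℝ) (φ := fun _ : Fin n => ℂ)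
      k).hasFDerivAt.comp q hM, fun v => congrFun (hMe v) k⟩
  have hre2 : ∀ q ∈ W, ∀ v k, ((hessF (Ψ q)).mulVec (fderiv ℝ Ψ q v) k).re = v.2 k := by
    intro q hq v k
    obtain ⟨M, hM, hMe⟩ := hgk q hq k
    have h1 := Complex.reCLM.hasFDerivAt.comp q hM
    have h2 : HasFDerivAt (fun r : (Fin n → ℝ) × (Fin n → ℝ) => r.2 k)
      ((ContinuousLinearMap.proj (R := ℝ) (φ := fun _ : Fin n => ℝ) k).comp
        (ContinuousLinearMap.snd ℝ _ _)) q :=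
      ((ContinuousLinearMap.proj (R := ℝ) (φ := fun _ : Fin n => ℝ) k).comp
        (ContinuousLinearMap.snd ℝ (Fin n → ℝ) (Fin n → ℝ))).hasFDerivAt
    have h3 := h2.congr_of_eventuallyEq (f₁ := Complex.reCLM ∘ fun r => gradF (Ψ r) k) (by
      filter_upwards [hW.mem_nhds hq] with r hr
      exact congrFun (congrArg Prod.snd (hΨinv r hr)) k)
    have := DFunLike.congr_fun (h1.unique h3) v
    rw [← hMe]
    exact this
  have hfirst : ∀ q ∈ W, fderiv ℝ f q w' =
      2 * ∑ k, ((gradF (Ψ q) k).im * w'.1 k - (Ψ q k).im * w'.2 k) := by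
    intro q hq
    obtain ⟨L, hL, hLe⟩ := hF (Ψ q) (hΨU q hq)
    have h1 := Complex.imCLM.hasFDerivAt.comp q ((hL.restrictScalars ℝ).comp q (hdΨ q hq))
    have hy : ∀ k, HasFDerivAt (fun r : (Fin n → ℝ) × (Fin n → ℝ) => r.2 k)
      ((ContinuousLinearMap.proj (R := ℝ) (φ := fun _ : Fin n => ℝ) k).comp
        (ContinuousLinearMap.snd ℝ _ _)) q := fun k =>
      ((ContinuousLinearMap.proj (R := ℝ) (φ := fun _ : Fin n => ℝ) k).comp
        (ContinuousLinearMap.snd ℝ (Fin n → ℝ) (Fin n → ℝ))).hasFDerivAt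
    have hs := HasFDerivAt.fun_sum (u := Finset.univ) (fun k _ =>
      (hy k).mul (Complex.imCLM.hasFDerivAt.comp q (hk q hq k)))
    have h2 := (h1.const_mul 2).sub (hs.const_mul 2)
    have hfe : HasFDerivAt f _ q := h2.congr_of_eventuallyEq
      (Filter.Eventually.of_forall fun r => hf r)
    rw [hfe.fderiv]
    have hLe' := hLe (fderiv ℝ Ψ q w')
    have hb : ∀ k, (gradF (Ψ q) k).re = q.2 k := fun k =>
      congrFun (congrArg Prod.snd (hΨinv q hq)) k
    simp [hLe', hre q hq, hb]
    rw [← mul_sub, ← Finset.sum_sub_distrib, ← Finset.sum_sub_distrib]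
    congr 1
    exact Finset.sum_congr rfl fun k _ => by ring
  have hev : (fun q => fderiv ℝ f q w') =ᶠ[nhds p] fun q =>
      2 * ∑ k, ((gradF (Ψ q) k).im * w'.1 k - (Ψ q k).im * w'.2 k) := by
    filter_upwards [hW.mem_nhds hp] with q hq using hfirst q hq
  choose M hM hMe using hgk p hp
  have hs := (HasFDerivAt.fun_sum (u := Finset.univ) (fun k _ =>
      ((Complex.imCLM.hasFDerivAt.comp p (hM k)).mul_const (w'.1 k)).sub
      ((Complex.imCLM.hasFDerivAt.comp p (hk p hp k)).mul_const (w'.2 k)))).const_mul (2:ℝ)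
  have hfin : HasFDerivAt (fun q => fderiv ℝ f q w') _ p := hs.congr_of_eventuallyEq hev
  rw [hfin.fderiv]
  have hsy : ∀ k l, hessF (Ψ p) k l = hessF (Ψ p) l k := fun k l =>
    ((hsymm _ (hΨU p hp)).apply k l).symm
  simp [hMe, ← hre p hp w', ← hre2 p hp w']
  simp only [Matrix.mulVec, dotProduct, Complex.im_sum, Complex.re_sum, Finset.sum_mul,
    Finset.mul_sum]
  rw [Finset.sum_comm, ← Finset.sum_sub_distrib]
  refine Finset.sum_congr rfl fun k _ => ?_
  rw [← Finset.sum_sub_distrib]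
  refine Finset.sum_congr rfl fun l _ => ?_
  rw [hsy l k]
  simp only [Complex.mul_im, Complex.mul_re]
  ring
end
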